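/- arXiv:2312.06476 — 2 statements merged into one kernel-verified Lean document; each statement's English description precedes it below -/
import Mathlib

section
/- For every ε ∈ [2/9, 1/3), the domain V_ε = μ⁻¹(Q_ε) ⊂ ℂ² symplectically embeds into the ball B⁴(3ε) = E(3ε, 3ε) ⊂ ℂ². (More precisely, the interior of V_ε symplectically embeds into B⁴(3ε).) -/
/-!
After rescaling, the target ball is `|z₁|² + |z₂|² ≤ 6`, and for every `ε ≥ 2/9` the domain is
contained in the case `ε = 2/9`, i.e. in the toric domain `V0` over the quadrilateral with vertices
`(0,0)`, `(9,0)`, `(2,2)`, `(0,9)`. It then suffices to fold twice: the part of the domain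
protruding from the ball along the `z₁`-axis is folded upwards, then the part protruding along the
`z₂`-axis is treated by the same map with the coordinates exchanged (`Psi`).

**One fold.** Let `u = |z₁|² + 2|z₂|² - 6` and `p = |z₂|²`. The chart `(u, α, w)` (`Chart`) makes
`u` conjugate to an angle `α`, and the level sets of `u` reduce to discs in the `w`-plane, with
`p = |w|²`. The folding map `Fold` preserves `u`, moves only points with `p < a(u) = 2 - 2u/3`, and
for `u ≥ 0` takes `p < a(u)` into the annulus `u < p < a(u) + u` (`Fold_mem`). There `u < p` says
exactly that `|z₁|² + |z₂|² < 6`, and `p < a(u) + u` that `|z₂| < |z₁|`; so the image is in the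
ball and away from the other arm `|z₁| ≤ |z₂|`, which gives injectivity (`Fold_injOn`).

**Why it exists.** For `u ≥ 0` the disc `p < a(u)` has to be mapped, preserving area, into an
annulus with the same area. The disc is first identified with the slit disc, the complement of a
radius in it (`SA`, `TA`), and the slit disc is then shifted by `p ↦ p + u` with its angle kept
(`SB`, `TB`). Both steps are *correspondences*: pairs of immersions from one parameter space
inducing the same two-form, the equality being the symmetry of the Hessian of a generating function
(`m(u, |v|²)` in the first step, `S(u, p, θ)`, equal to `u θ` for `u ≥ 0`, in the second). Such a
pair defines a symplectic map (`sympAt_of_correspondence`).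

For `u < 0` the generating functions are modified so that both maps become the identity near
`p = a(u)` and for `u < -1/2`. In the first, a smooth function `e(u) > 0` closes the slit; in the
second, cut-offs of width of order `√(-u)` are inserted in `p` and `θ`, which is possible because
the product of the two Lipschitz constants, of order `1/|u|`, is beaten by the factor `u` of the
generating function. No smoothness is required at the points with `u = 0`, `p = a(u)`, where the
quadrilateral has its reentrant corner `(2,2)`, since these are not in `V0`.

**Conclusion.** `second_fold` collects the elementary inequalities showing that the first fold maps
`V0` into the domain of the second and that the result lies in the ball.
-/

open Set MeasureTheory
open scoped Real ENNReal Pointwise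

noncomputable section

/-- The standard symplectic form `ω = Σᵢ dxᵢ ∧ dyᵢ` on `ℂⁿ ≅ ℝ²ⁿ`. -/
def stdSymp (n : ℕ) (v w : Fin n → ℂ) : ℝ :=
  ∑ i, ((starRingEnd ℂ) (v i) * w i).im

/-- `X` symplectically embeds into `X'` (both subsets of `ℂⁿ`): there is an injective map
`φ : X → ℂⁿ` with image in `X'`, smooth on the interior of `X`, whose derivative preserves
the standard symplectic form at every interior point. -/
def SympEmb (n : ℕ) (X X' : Set (Fin n → ℂ)) : Prop :=
  ∃ φ : (Fin n → ℂ) → (Fin n → ℂ),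
    Set.InjOn φ X ∧ φ '' X ⊆ X' ∧ ContDiffOn ℝ (⊤ : ℕ∞) φ (interior X) ∧
    ∀ x ∈ interior X, ∀ v w : Fin n → ℂ,
      stdSymp n (fderiv ℝ φ x v) (fderiv ℝ φ x w) = stdSymp n v w

/-- The ellipsoid `E(a₁,…,aₙ) ⊂ ℂⁿ`. -/
def ellipsoid {n : ℕ} (a : Fin n → ℝ) : Set (Fin n → ℂ) :=
  {z | ∑ i, Real.pi * ‖z i‖ ^ 2 / a i ≤ 1}

/-- The polydisk `P(a₁,…,aₙ) ⊂ ℂⁿ`. -/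
def polydisk {n : ℕ} (a : Fin n → ℝ) : Set (Fin n → ℂ) :=
  {z | ∀ i, Real.pi * ‖z i‖ ^ 2 ≤ a i}

/-- `Nk k a` is the `k`-th smallest element (with multiplicity) of the multiset
`{m · aᵢ : m ∈ ℤ_{>0}, 1 ≤ i ≤ n}`. -/
def Nk {n : ℕ} (k : ℕ) (a : Fin n → ℝ) : ℝ :=
  sInf {t : ℝ | k ≤ {p : Fin n × ℕ | ((p.2 : ℝ) + 1) * a p.1 ≤ t}.ncard}

/-- `c_k^max(X)`: the infimum of `N_k(a)` over ellipsoids `E(a)` into which `X`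
symplectically embeds. -/
def ckmax (n k : ℕ) (X : Set (Fin n → ℂ)) : ℝ :=
  sInf {c : ℝ | ∃ a : Fin n → ℝ, (∀ i, 0 < a i) ∧ SympEmb n X (ellipsoid a) ∧ c = Nk k a}

/-- `c_k^min(X)`: the supremum of `N_k(a)` over ellipsoids `E(a)` symplectically
embedding into `X`. -/
def ckmin (n k : ℕ) (X : Set (Fin n → ℂ)) : ℝ :=
  sSup {c : ℝ | ∃ a : Fin n → ℝ, (∀ i, 0 < a i) ∧ SympEmb n (ellipsoid a) X ∧ c = Nk k a}

/-- The moment map `μ(z₁,…,zₙ) = (π|z₁|²,…,π|zₙ|²)`. -/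
def momentMap (n : ℕ) (z : Fin n → ℂ) : Fin n → ℝ := fun i => Real.pi * ‖z i‖ ^ 2

/-- The toric domain `X_Ω = μ⁻¹(Ω)`. -/
def toricDomain {n : ℕ} (Ω : Set (Fin n → ℝ)) : Set (Fin n → ℂ) :=
  momentMap n ⁻¹' Ω

/-- `X_Ω` is a convex toric domain: `Ω ⊆ [0,∞)ⁿ`, the symmetrization
`Ω̂ = {x : (|x₁|,…,|xₙ|) ∈ Ω}` is compact and convex, and `Ω` is the closure of a
nonempty relatively open subset of `[0,∞)ⁿ`. -/
def IsConvexToricDomain {n : ℕ} (Ω : Set (Fin n → ℝ)) : Prop :=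
  Ω ⊆ {x | ∀ i, 0 ≤ x i} ∧
  IsCompact {x : Fin n → ℝ | (fun i => |x i|) ∈ Ω} ∧
  Convex ℝ {x : Fin n → ℝ | (fun i => |x i|) ∈ Ω} ∧
  ∃ V : Set (Fin n → ℝ), IsOpen V ∧ (V ∩ {x | ∀ i, 0 ≤ x i}).Nonempty ∧
    Ω = closure (V ∩ {x | ∀ i, 0 ≤ x i})

/-- The quadrilateral `Q_ε` with vertices `(0,0)`, `(1,0)`, `(ε,ε)`, `(0,1)`, i.e. the union
of the triangles `conv{(0,0),(1,0),(ε,ε)}` and `conv{(0,0),(ε,ε),(0,1)}`. -/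
def Qeps (ε : ℝ) : Set (Fin 2 → ℝ) :=
  convexHull ℝ {![0, 0], ![1, 0], ![ε, ε]} ∪ convexHull ℝ {![0, 0], ![ε, ε], ![0, 1]}

namespace ToricFold

open Topology Filter

/-! ### Symplectic maps at a point and correspondences -/

section Framework

variable {E F G : Type*} [NormedAddCommGroup E] [NormedSpace ℝ E]
  [NormedAddCommGroup F] [NormedSpace ℝ F] [NormedAddCommGroup G] [NormedSpace ℝ G]

/-- `φ` is smooth at `x` and its derivative there pulls the two-form `ω'` back to `ω`. Forms with
constant coefficients are encoded as plain functions of two tangent vectors. -/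
def SympAt (ω : E → E → ℝ) (ω' : F → F → ℝ) (φ : E → F) (x : E) : Prop :=
  ContDiffAt ℝ (⊤ : ℕ∞) φ x ∧
    ∀ v w, ω' (fderiv ℝ φ x v) (fderiv ℝ φ x w) = ω v w

lemma sympAt_id (ω : E → E → ℝ) (x : E) : SympAt ω ω (fun y => y) x := by
  refine ⟨contDiffAt_id, fun v w => ?_⟩
  simp

lemma SympAt.congr {ω : E → E → ℝ} {ω' : F → F → ℝ} {φ ψ : E → F} {x : E}
    (h : SympAt ω ω' φ x) (he : ψ =ᶠ[𝓝 x] φ) : SympAt ω ω' ψ x := by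
  refine ⟨h.1.congr_of_eventuallyEq he, fun v w => ?_⟩
  rw [he.fderiv_eq]
  exact h.2 v w

lemma SympAt.comp {ω : E → E → ℝ} {ω' : F → F → ℝ} {ω'' : G → G → ℝ} {φ : E → F} {ψ : F → G}
    {x : E} (hψ : SympAt ω' ω'' ψ (φ x)) (hφ : SympAt ω ω' φ x) :
    SympAt ω ω'' (fun y => ψ (φ y)) x := by
  refine ⟨hψ.1.comp x hφ.1, fun v w => ?_⟩
  have : fderiv ℝ (fun y => ψ (φ y)) x = (fderiv ℝ ψ (φ x)).comp (fderiv ℝ φ x) :=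
    fderiv_comp x (hψ.1.differentiableAt (by simp)) (hφ.1.differentiableAt (by simp))
  rw [this]
  simp only [ContinuousLinearMap.comp_apply]
  rw [hψ.2, hφ.2]

/-- A map pulling back a form to a nondegenerate one is an immersion. -/
lemma SympAt.injective {ω : E → E → ℝ} {ω' : F → F → ℝ} {φ : E → F} {x : E}
    (h : SympAt ω ω' φ x) (hω' : ∀ w, ω' 0 w = 0)
    (hω : ∀ v, (∀ w, ω v w = 0) → v = 0) : Function.Injective (fderiv ℝ φ x) := by
  rw [injective_iff_map_eq_zero]
  intro v hv
  apply hω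
  intro w
  rw [← h.2 v w, hv]
  exact hω' _

/-- Correspondence principle: if `S` is an immersion between spaces of equal dimension at `s`
and `φ ∘ S = T` near `s`, then `φ` is smooth at `S s`, and it pulls `ω'` back to `ω` as soon as
`S` and `T` induce the same form. -/
lemma sympAt_of_correspondence [FiniteDimensional ℝ E] [FiniteDimensional ℝ F] [CompleteSpace E]
    (hdim : Module.finrank ℝ E = Module.finrank ℝ F)
    {ω : F → F → ℝ} {ω' : G → G → ℝ} {S : E → F} {T : E → G} {φ : F → G} {s : E}
    (hS : ContDiffAt ℝ (⊤ : ℕ∞) S s) (hT : ContDiffAt ℝ (⊤ : ℕ∞) T s)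
    (hinj : Function.Injective (fderiv ℝ S s))
    (he : ∀ᶠ x in 𝓝 s, φ (S x) = T x)
    (hform : ∀ v w, ω' (fderiv ℝ T s v) (fderiv ℝ T s w) = ω (fderiv ℝ S s v) (fderiv ℝ S s w)) :
    SympAt ω ω' φ (S s) := by
  let L : E ≃ₗ[ℝ] F := LinearMap.linearEquivOfInjective (fderiv ℝ S s).toLinearMap hinj hdim
  let e : E ≃L[ℝ] F := L.toContinuousLinearEquiv
  have hee : (e : E →L[ℝ] F) = fderiv ℝ S s := by
    ext v
    simp [e, L]
  have hSd : HasFDerivAt S (e : E →L[ℝ] F) s := by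
    rw [hee]
    exact (hS.differentiableAt (by simp)).hasFDerivAt
  have hSs : HasStrictFDerivAt S (e : E →L[ℝ] F) s := hS.hasStrictFDerivAt' hSd (by simp)
  set R := hS.localInverse hSd (by simp) with hR
  have hRc : ContDiffAt ℝ (⊤ : ℕ∞) R (S s) := hS.to_localInverse hSd (by simp)
  have hRs : R (S s) = s := hS.localInverse_apply_image hSd (by simp)
  have hright : ∀ᶠ y in 𝓝 (S s), S (R y) = y := hSs.eventually_right_inverse
  have hRt : Tendsto R (𝓝 (S s)) (𝓝 s) := by
    have := hRc.continuousAt.tendsto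
    rwa [hRs] at this
  have hφ : φ =ᶠ[𝓝 (S s)] fun y => T (R y) := by
    filter_upwards [hright, hRt.eventually he] with y h1 h2
    rw [← h2, h1]
  have hφc : ContDiffAt ℝ (⊤ : ℕ∞) φ (S s) := by
    refine ContDiffAt.congr_of_eventuallyEq ?_ hφ
    refine ContDiffAt.comp (S s) ?_ hRc
    rw [hRs]; exact hT
  have hcomp : fderiv ℝ T s = (fderiv ℝ φ (S s)).comp (fderiv ℝ S s) := by
    have h1 : (fun x => φ (S x)) =ᶠ[𝓝 s] T := he
    rw [← h1.fderiv_eq]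
    exact fderiv_comp s (hφc.differentiableAt (by simp)) (hS.differentiableAt (by simp))
  refine ⟨hφc, fun v w => ?_⟩
  obtain ⟨v', rfl⟩ := L.surjective v
  obtain ⟨w', rfl⟩ := L.surjective w
  have := hform v' w'
  rw [hcomp] at this
  exact this

end Framework

/-! ### The area form, twisting by a phase, and the two charts -/

/-- The area form on `ℂ`. -/
def ar (x y : ℂ) : ℝ := ((starRingEnd ℂ) x * y).im

lemma ar_eq (x y : ℂ) : ar x y = x.re * y.im - x.im * y.re := by
  simp [ar]; ring

/-- The form `½ du ∧ dα + dA(w)` on the chart space of triples `(u, α, w)`. -/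
def Om (x y : ℝ × ℝ × ℂ) : ℝ := (x.1 * y.2.1 - x.2.1 * y.1) / 2 + ar x.2.2 y.2.2

/-- The form `½ (du ∧ dα + dp ∧ dθ)` on quadruples `(u, α, p, θ)`. -/
def Om4 (x y : ℝ × ℝ × ℝ × ℝ) : ℝ :=
  (x.1 * y.2.1 - x.2.1 * y.1) / 2 + (x.2.2.1 * y.2.2.2 - x.2.2.2 * y.2.2.1) / 2

lemma Om_zero (w : ℝ × ℝ × ℂ) : Om 0 w = 0 := by simp [Om, ar]

lemma Om_nondeg (v : ℝ × ℝ × ℂ) (h : ∀ w, Om v w = 0) : v = 0 := by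
  have h1 := h (1, 0, 0)
  have h2 := h (0, 1, 0)
  have h3 := h (0, 0, 1)
  have h4 := h (0, 0, Complex.I)
  simp [Om, ar] at h1 h2 h3 h4
  exact Prod.ext h2 (Prod.ext h1 (Complex.ext h4 h3))

lemma Om4_nondeg (v : ℝ × ℝ × ℝ × ℝ) (h : ∀ w, Om4 v w = 0) : v = 0 := by
  have h1 := h (1, 0, 0, 0)
  have h2 := h (0, 1, 0, 0)
  have h3 := h (0, 0, 1, 0)
  have h4 := h (0, 0, 0, 1)
  simp [Om4] at h1 h2 h3 h4
  ext <;> simp [*]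

lemma stdSymp_zero (w : Fin 2 → ℂ) : stdSymp 2 0 w = 0 := by simp [stdSymp]

lemma stdSymp_two (v w : Fin 2 → ℂ) : stdSymp 2 v w = ar (v 0) (w 0) + ar (v 1) (w 1) := by
  simp [stdSymp, ar, Fin.sum_univ_two]

lemma finrank_G : Module.finrank ℝ (ℝ × ℝ × ℂ) = 4 := by
  simp [Module.finrank_prod, Complex.finrank_real_complex]

lemma finrank_E4 : Module.finrank ℝ (ℝ × ℝ × ℝ × ℝ) = 4 := by
  simp [Module.finrank_prod]

lemma finrank_C2 : Module.finrank ℝ (Fin 2 → ℂ) = 4 := by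
  simp [Module.finrank_pi_fintype, Complex.finrank_real_complex]

section Twist

variable {E : Type*} [NormedAddCommGroup E] [NormedSpace ℝ E]

/-- Multiplying a complex function `f` by a phase `exp (iβ)` adds `½ d|f|² ∧ dβ` to the
pulled-back area form. -/
lemma twist_form {f : E → ℂ} {β : E → ℝ} {x : E} (hf : DifferentiableAt ℝ f x)
    (hβ : DifferentiableAt ℝ β x) (v w : E) :
    ar (fderiv ℝ (fun s => f s * Complex.exp (β s * Complex.I)) x v)
        (fderiv ℝ (fun s => f s * Complex.exp (β s * Complex.I)) x w)
      = ar (fderiv ℝ f x v) (fderiv ℝ f x w)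
        + ((starRingEnd ℂ) (f x) * fderiv ℝ f x v).re * fderiv ℝ β x w
        - ((starRingEnd ℂ) (f x) * fderiv ℝ f x w).re * fderiv ℝ β x v := by
  have h1 : HasFDerivAt (fun s => ((β s : ℝ) : ℂ))
      (Complex.ofRealCLM.comp (fderiv ℝ β x)) x :=
    Complex.ofRealCLM.hasFDerivAt.comp x hβ.hasFDerivAt
  have h2 := (h1.mul_const Complex.I).cexp
  have h3 := hf.hasFDerivAt.mul h2
  have key : ∀ y, fderiv ℝ (fun s => f s * Complex.exp (β s * Complex.I)) x y
      = Complex.exp (β x * Complex.I) * (fderiv ℝ f x y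
        + f x * ((fderiv ℝ β x y : ℝ) : ℂ) * Complex.I) := by
    intro y
    have h4 : HasFDerivAt (fun s => f s * Complex.exp (β s * Complex.I)) _ x := h3
    rw [h4.fderiv]
    simp
    ring
  rw [key, key]
  have hn : ∀ t : ℝ, ∀ a b : ℂ, ar (Complex.exp (t * Complex.I) * a)
      (Complex.exp (t * Complex.I) * b) = ar a b := by
    intro t a b
    have := Real.sin_sq_add_cos_sq t
    rw [ar_eq, ar_eq]
    simp only [Complex.mul_re, Complex.mul_im, Complex.exp_ofReal_mul_I_re,
      Complex.exp_ofReal_mul_I_im]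
    linear_combination (a.re * b.im - a.im * b.re) * this
  rw [hn, ar_eq, ar_eq]
  simp
  ring

lemma contDiffAt_twist {f : E → ℂ} {β : E → ℝ} {x : E} (hf : ContDiffAt ℝ (⊤ : ℕ∞) f x)
    (hβ : ContDiffAt ℝ (⊤ : ℕ∞) β x) :
    ContDiffAt ℝ (⊤ : ℕ∞) (fun s => f s * Complex.exp (β s * Complex.I)) x := by
  have h1 : ContDiffAt ℝ (⊤ : ℕ∞) (fun s => ((β s : ℝ) : ℂ)) x :=
    Complex.ofRealCLM.contDiff.contDiffAt.comp x hβ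
  exact hf.mul ((h1.mul contDiffAt_const).cexp)

end Twist

lemma norm_mul_exp (z : ℂ) (t : ℝ) : ‖z * Complex.exp (t * Complex.I)‖ = ‖z‖ := by
  rw [norm_mul, Complex.norm_exp_ofReal_mul_I, mul_one]

/-- Real-analytic expression of `|w|²`. -/
lemma normSq_contDiff : ContDiff ℝ (⊤ : ℕ∞) Complex.normSq := by
  have : (Complex.normSq : ℂ → ℝ) = fun w => w.re * w.re + w.im * w.im := by
    ext w; exact Complex.normSq_apply w
  rw [this]
  have h1 : ContDiff ℝ (⊤ : ℕ∞) (fun w : ℂ => w.re) := Complex.reCLM.contDiff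
  have h2 : ContDiff ℝ (⊤ : ℕ∞) (fun w : ℂ => w.im) := Complex.imCLM.contDiff
  exact (h1.mul h1).add (h2.mul h2)

lemma hasFDerivAt_normSq (w : ℂ) :
    HasFDerivAt Complex.normSq ((2 * w.re) • Complex.reCLM + (2 * w.im) • Complex.imCLM) w := by
  have : (Complex.normSq : ℂ → ℝ) = fun w => w.re * w.re + w.im * w.im := by
    ext w; exact Complex.normSq_apply w
  rw [this]
  have h1 : HasFDerivAt (fun w : ℂ => w.re) Complex.reCLM w := Complex.reCLM.hasFDerivAt
  have h2 : HasFDerivAt (fun w : ℂ => w.im) Complex.imCLM w := Complex.imCLM.hasFDerivAt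
  refine ((h1.mul h1).add (h2.mul h2)).congr_fderiv ?_
  ext y
  simp; ring

/-- The chart `(u, α, w) ↦ (√(6 + u - 2|w|²) e^{iα}, w e^{2iα})`, which straightens the Hamiltonian
`u = |z₁|² + 2|z₂|² - 6`; the angle `α` is its conjugate variable. -/
def Chart (y : ℝ × ℝ × ℂ) : Fin 2 → ℂ :=
  ![(Real.sqrt (6 + y.1 - 2 * Complex.normSq y.2.2) : ℂ) * Complex.exp ((y.2.1 : ℝ) * Complex.I),
    y.2.2 * Complex.exp ((2 * y.2.1 : ℝ) * Complex.I)]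

lemma chart_sympAt {y : ℝ × ℝ × ℂ} (hy : 0 < 6 + y.1 - 2 * Complex.normSq y.2.2) :
    SympAt Om (stdSymp 2) Chart y := by
  -- the radicand
  set r : ℝ × ℝ × ℂ → ℝ := fun y => 6 + y.1 - 2 * Complex.normSq y.2.2 with hr
  have hrc : ContDiff ℝ (⊤ : ℕ∞) r := by
    have := normSq_contDiff
    fun_prop
  have hrd : HasFDerivAt r (ContinuousLinearMap.fst ℝ ℝ (ℝ × ℂ) - (2 : ℝ) •
      (((2 * y.2.2.re) • Complex.reCLM + (2 * y.2.2.im) • Complex.imCLM).comp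
        ((ContinuousLinearMap.snd ℝ ℝ ℂ).comp (ContinuousLinearMap.snd ℝ ℝ (ℝ × ℂ))))) y := by
    have h1 : HasFDerivAt (fun y : ℝ × ℝ × ℂ => Complex.normSq y.2.2)
      (((2 * y.2.2.re) • Complex.reCLM + (2 * y.2.2.im) • Complex.imCLM).comp
        ((ContinuousLinearMap.snd ℝ ℝ ℂ).comp (ContinuousLinearMap.snd ℝ ℝ (ℝ × ℂ)))) y :=
      (hasFDerivAt_normSq y.2.2).comp y
        ((ContinuousLinearMap.snd ℝ ℝ ℂ).comp (ContinuousLinearMap.snd ℝ ℝ (ℝ × ℂ))).hasFDerivAt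
    exact (hasFDerivAt_fst.const_add 6).sub (h1.const_smul (2 : ℝ))
  have hsd := hrd.sqrt hy.ne'
  have hfd : HasFDerivAt (fun y => ((Real.sqrt (r y) : ℝ) : ℂ)) _ y :=
    Complex.ofRealCLM.hasFDerivAt.comp y hsd
  have hfc : ContDiffAt ℝ (⊤ : ℕ∞) (fun y => ((Real.sqrt (r y) : ℝ) : ℂ)) y :=
    Complex.ofRealCLM.contDiff.contDiffAt.comp y (hrc.contDiffAt.sqrt hy.ne')
  have ha : HasFDerivAt (fun y : ℝ × ℝ × ℂ => y.2.1)
      ((ContinuousLinearMap.fst ℝ ℝ ℂ).comp (ContinuousLinearMap.snd ℝ ℝ (ℝ × ℂ))) y :=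
    ((ContinuousLinearMap.fst ℝ ℝ ℂ).comp (ContinuousLinearMap.snd ℝ ℝ (ℝ × ℂ))).hasFDerivAt
  have hac : ContDiffAt ℝ (⊤ : ℕ∞) (fun y : ℝ × ℝ × ℂ => y.2.1) y := by fun_prop
  have ha2 : HasFDerivAt (fun y : ℝ × ℝ × ℂ => 2 * y.2.1)
      ((2 : ℝ) • ((ContinuousLinearMap.fst ℝ ℝ ℂ).comp
        (ContinuousLinearMap.snd ℝ ℝ (ℝ × ℂ)))) y := ha.const_smul (2 : ℝ)
  have hac2 : ContDiffAt ℝ (⊤ : ℕ∞) (fun y : ℝ × ℝ × ℂ => 2 * y.2.1) y := by fun_prop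
  have hw : HasFDerivAt (fun y : ℝ × ℝ × ℂ => y.2.2)
      ((ContinuousLinearMap.snd ℝ ℝ ℂ).comp (ContinuousLinearMap.snd ℝ ℝ (ℝ × ℂ))) y :=
    ((ContinuousLinearMap.snd ℝ ℝ ℂ).comp (ContinuousLinearMap.snd ℝ ℝ (ℝ × ℂ))).hasFDerivAt
  have hwc : ContDiffAt ℝ (⊤ : ℕ∞) (fun y : ℝ × ℝ × ℂ => y.2.2) y := by fun_prop
  have hC0 : ContDiffAt ℝ (⊤ : ℕ∞) (fun y => Chart y 0) y := contDiffAt_twist hfc hac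
  have hC1 : ContDiffAt ℝ (⊤ : ℕ∞) (fun y => Chart y 1) y := contDiffAt_twist hwc hac2
  have hC : ContDiffAt ℝ (⊤ : ℕ∞) Chart y := by
    rw [contDiffAt_pi]
    intro i
    fin_cases i
    · exact hC0
    · exact hC1
  have hCd : ∀ v i, fderiv ℝ Chart y v i = fderiv ℝ (fun y => Chart y i) y v := by
    intro v i
    rw [fderiv_apply (hC.differentiableAt (by simp))]
    rfl
  refine ⟨hC, fun v w => ?_⟩
  rw [stdSymp_two, hCd, hCd, hCd, hCd]
  have e0 := twist_form hfd.differentiableAt ha.differentiableAt v w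
  have e1 := twist_form hw.differentiableAt ha2.differentiableAt v w
  rw [hfd.fderiv, ha.fderiv] at e0
  rw [hw.fderiv, ha2.fderiv] at e1
  have hs : Real.sqrt (r y) ≠ 0 := (Real.sqrt_pos.2 hy).ne'
  refine (congrArg₂ (· + ·) e0 e1).trans ?_
  simp [Om, ar_eq]
  field_simp
  ring

/-- Polar coordinates `w = -√p e^{iθ}` about the negative axis. -/
def Pol (t : ℝ × ℝ × ℝ × ℝ) : ℝ × ℝ × ℂ :=
  (t.1, t.2.1, (-(Real.sqrt t.2.2.1 : ℂ)) * Complex.exp ((t.2.2.2 : ℝ) * Complex.I))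

lemma pol_sympAt {t : ℝ × ℝ × ℝ × ℝ} (ht : 0 < t.2.2.1) : SympAt Om4 Om Pol t := by
  set Lp : (ℝ × ℝ × ℝ × ℝ) →L[ℝ] ℝ := (ContinuousLinearMap.fst ℝ ℝ ℝ).comp
    ((ContinuousLinearMap.snd ℝ ℝ (ℝ × ℝ)).comp (ContinuousLinearMap.snd ℝ ℝ (ℝ × ℝ × ℝ))) with hLp
  set Lt : (ℝ × ℝ × ℝ × ℝ) →L[ℝ] ℝ := (ContinuousLinearMap.snd ℝ ℝ ℝ).comp
    ((ContinuousLinearMap.snd ℝ ℝ (ℝ × ℝ)).comp (ContinuousLinearMap.snd ℝ ℝ (ℝ × ℝ × ℝ))) with hLt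
  have hp : HasFDerivAt (fun t : ℝ × ℝ × ℝ × ℝ => t.2.2.1) Lp t := Lp.hasFDerivAt
  have hth : HasFDerivAt (fun t : ℝ × ℝ × ℝ × ℝ => t.2.2.2) Lt t := Lt.hasFDerivAt
  have hfd : HasFDerivAt (fun t : ℝ × ℝ × ℝ × ℝ => -((Real.sqrt t.2.2.1 : ℝ) : ℂ)) _ t :=
    (Complex.ofRealCLM.hasFDerivAt.comp t (hp.sqrt ht.ne')).neg
  have hfc : ContDiffAt ℝ (⊤ : ℕ∞) (fun t : ℝ × ℝ × ℝ × ℝ => -((Real.sqrt t.2.2.1 : ℝ) : ℂ)) t := by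
    have h0 : ContDiffAt ℝ (⊤ : ℕ∞) (fun t : ℝ × ℝ × ℝ × ℝ => t.2.2.1) t := by fun_prop
    exact (Complex.ofRealCLM.contDiff.contDiffAt.comp t (h0.sqrt ht.ne')).neg
  have hthc : ContDiffAt ℝ (⊤ : ℕ∞) (fun t : ℝ × ℝ × ℝ × ℝ => t.2.2.2) t := by fun_prop
  have h3 := contDiffAt_twist hfc hthc
  have h1 : ContDiffAt ℝ (⊤ : ℕ∞) (fun t : ℝ × ℝ × ℝ × ℝ => t.1) t := by fun_prop
  have h2 : ContDiffAt ℝ (⊤ : ℕ∞) (fun t : ℝ × ℝ × ℝ × ℝ => t.2.1) t := by fun_prop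
  refine ⟨h1.prodMk (h2.prodMk h3), fun v w => ?_⟩
  have hD := (hasFDerivAt_fst (𝕜 := ℝ) (E := ℝ) (F := ℝ × ℝ × ℝ) (p := t)).prodMk
    ((((ContinuousLinearMap.fst ℝ ℝ (ℝ × ℝ)).comp
      (ContinuousLinearMap.snd ℝ ℝ (ℝ × ℝ × ℝ))).hasFDerivAt (x := t)).prodMk
      (h3.differentiableAt (by simp)).hasFDerivAt)
  have hP : fderiv ℝ Pol t = _ := hD.fderiv
  rw [hP]
  have e := twist_form hfd.differentiableAt hth.differentiableAt v w
  rw [hfd.fderiv, hth.fderiv] at e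
  simp only [Om, ContinuousLinearMap.prod_apply]
  rw [e]
  have hs : Real.sqrt t.2.2.1 ≠ 0 := (Real.sqrt_pos.2 ht).ne'
  simp [Om4, ar_eq, hLp, hLt]
  field_simp

/-- Symmetry of the Hessian, in the form used for generating functions. -/
lemma hessian_symm {E : Type*} [NormedAddCommGroup E] [NormedSpace ℝ E] {f : E → ℝ} {x : E}
    (hf : ContDiffAt ℝ (⊤ : ℕ∞) f x) (v w : E) :
    fderiv ℝ (fderiv ℝ f) x v w = fderiv ℝ (fderiv ℝ f) x w v :=
  (hf.isSymmSndFDerivAt (by simpa using WithTop.coe_le_coe.2 (le_top (a := (2 : ℕ∞))))) v w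

lemma contDiffAt_partial {E : Type*} [NormedAddCommGroup E] [NormedSpace ℝ E] {f : E → ℝ} {x : E}
    (hf : ContDiffAt ℝ (⊤ : ℕ∞) f x) (e : E) :
    ContDiffAt ℝ (⊤ : ℕ∞) (fun y => fderiv ℝ f y e) x :=
  (hf.fderiv_right (m := (⊤ : ℕ∞)) (by simp)).clm_apply contDiffAt_const

lemma fderiv_partial {E : Type*} [NormedAddCommGroup E] [NormedSpace ℝ E] {f : E → ℝ} {x : E}
    (hf : ContDiffAt ℝ (⊤ : ℕ∞) f x) (e v : E) :
    fderiv ℝ (fun y => fderiv ℝ f y e) x v = fderiv ℝ (fderiv ℝ f) x v e := by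
  have h : DifferentiableAt ℝ (fderiv ℝ f) x :=
    (hf.fderiv_right (m := (⊤ : ℕ∞)) (by simp)).differentiableAt (by simp)
  rw [fderiv_clm_apply h (by fun_prop)]
  simp

/-! ### First correspondence: opening the slit -/

/-- The threshold `a(u) = 2 - 2u/3`: the moved region is `|z₂|² < a(u)`. -/
def aa (u : ℝ) : ℝ := 2 - 2 * u / 3

/-- A smooth function, positive for `u < 0` and zero for `u ≥ 0`, regularising the slit map. -/
def ee (u : ℝ) : ℝ := 100 * expNegInvGlue (-u)

/-- A regularised positive part of `y`, equal to `max y 0` for `e = 0` and smooth for `e > 0`. -/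
def MM (e y : ℝ) : ℝ := if y ≤ 0 then 0 else y * Real.exp (-(e / y))

lemma ee_nonneg (u : ℝ) : 0 ≤ ee u := by
  have := expNegInvGlue.nonneg (-u)
  unfold ee; positivity

lemma ee_pos {u : ℝ} (h : u < 0) : 0 < ee u := by
  have := expNegInvGlue.pos_of_pos (neg_pos.2 h)
  unfold ee; positivity

lemma ee_zero {u : ℝ} (h : 0 ≤ u) : ee u = 0 := by
  simp [ee, expNegInvGlue.zero_of_nonpos (neg_nonpos.2 h)]

lemma ee_contDiff : ContDiff ℝ (⊤ : ℕ∞) ee := by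
  have : ContDiff ℝ (⊤ : ℕ∞) expNegInvGlue := expNegInvGlue.contDiff
  unfold ee
  exact contDiff_const.mul (this.comp contDiff_neg)

lemma aa_contDiff : ContDiff ℝ (⊤ : ℕ∞) aa := by
  unfold aa; fun_prop

/-- The regularisation already closes the hole completely for `u < -1/2`. -/
lemma aa_lt_ee {u : ℝ} (h1 : -1 < u) (h2 : u < -(1 / 2)) : aa u < ee u := by
  have h3 : expNegInvGlue (-u) = Real.exp (-(-u)⁻¹) := by
    rw [expNegInvGlue, if_neg (by linarith)]
  have h4 : (-u)⁻¹ ≤ 2 := by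
    rw [inv_le_comm₀ (by linarith) (by norm_num)]; linarith
  have h5 : Real.exp (-2) ≤ Real.exp (-(-u)⁻¹) := Real.exp_le_exp.2 (by linarith)
  have h6 : (1 / 9 : ℝ) ≤ Real.exp (-2) := by
    have h7 : Real.exp 2 ≤ 9 := by
      have := Real.exp_one_lt_d9
      have h8 : Real.exp 2 = Real.exp 1 * Real.exp 1 := by rw [← Real.exp_add]; norm_num
      rw [h8]
      nlinarith [Real.exp_pos 1]
    rw [Real.exp_neg, one_div]
    exact inv_anti₀ (Real.exp_pos 2) h7
  unfold aa ee
  rw [h3]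
  linarith

lemma MM_of_nonpos {e y : ℝ} (h : y ≤ 0) : MM e y = 0 := if_pos h

lemma MM_of_pos {e y : ℝ} (h : 0 < y) : MM e y = y * Real.exp (-(e / y)) := if_neg (not_le.2 h)

lemma MM_nonneg (e y : ℝ) : 0 ≤ MM e y := by
  rcases le_or_gt y 0 with h | h
  · rw [MM_of_nonpos h]
  · rw [MM_of_pos h]; positivity

lemma MM_le {e y : ℝ} (he : 0 ≤ e) (hy : 0 < y) : MM e y ≤ y := by
  rw [MM_of_pos hy]
  have : Real.exp (-(e / y)) ≤ 1 := Real.exp_le_one_iff.2 (by simp; positivity)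
  nlinarith

lemma MM_hasDerivAt {e y : ℝ} (hy : 0 < y) :
    HasDerivAt (MM e) ((1 + e / y) * Real.exp (-(e / y))) y := by
  have h1 : HasDerivAt (fun y => y * Real.exp (-(e / y)))
      (1 * Real.exp (-(e / y)) + y * (Real.exp (-(e / y)) * -((0 * y - e * 1) / y ^ 2))) y :=
    (hasDerivAt_id' y).mul (((hasDerivAt_const y e).div (hasDerivAt_id' y) hy.ne').neg.exp)
  have h2 : HasDerivAt (MM e) _ y := h1.congr_of_eventuallyEq
    ((eventually_gt_nhds hy).mono fun z hz => MM_of_pos hz)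
  convert h2 using 1
  field_simp
  ring

lemma MM_slope {e : ℝ} (he : 0 ≤ e) {x y : ℝ} (hxy : x ≤ y) :
    0 ≤ MM e y - MM e x ∧ MM e y - MM e x ≤ y - x := by
  rcases le_or_gt x 0 with hx | hx
  · rw [MM_of_nonpos hx]
    rcases le_or_gt y 0 with hy | hy
    · rw [MM_of_nonpos hy]; constructor <;> linarith
    · have := MM_le he hy
      have := MM_nonneg e y
      constructor <;> linarith
  · have hd : ∀ z ∈ Ioi (0 : ℝ), HasDerivAt (MM e) ((1 + e / z) * Real.exp (-(e / z))) z :=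
      fun z hz => MM_hasDerivAt hz
    have hb : ∀ z ∈ Ioi (0 : ℝ), 0 ≤ deriv (MM e) z ∧ deriv (MM e) z ≤ 1 := by
      intro z hz
      have hz' : (0 : ℝ) < z := hz
      rw [(hd z hz).deriv]
      refine ⟨by positivity, ?_⟩
      rw [Real.exp_neg, ← div_eq_mul_inv, div_le_one (Real.exp_pos _)]
      linarith [Real.add_one_le_exp (e / z)]
    have hc : ContinuousOn (MM e) (Ioi 0) := fun z hz => (hd z hz).continuousAt.continuousWithinAt
    have hdi : DifferentiableOn ℝ (MM e) (interior (Ioi 0)) := by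
      rw [interior_Ioi]
      exact fun z hz => (hd z hz).differentiableAt.differentiableWithinAt
    constructor
    · have := (convex_Ioi (0 : ℝ)).mul_sub_le_image_sub_of_le_deriv hc hdi (C := 0)
        (by rw [interior_Ioi]; exact fun z hz => (hb z hz).1) x hx y (hx.trans_le hxy) hxy
      linarith
    · have := (convex_Ioi (0 : ℝ)).image_sub_le_mul_sub_of_deriv_le hc hdi (C := 1)
        (by rw [interior_Ioi]; exact fun z hz => (hb z hz).2) x hx y (hx.trans_le hxy) hxy
      linarith

lemma MM_lip {e : ℝ} (he : 0 ≤ e) (x y : ℝ) : |MM e y - MM e x| ≤ |y - x| := by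
  rcases le_total x y with h | h
  · have := MM_slope he h
    rw [abs_of_nonneg this.1, abs_of_nonneg (by linarith)]
    exact this.2
  · have := MM_slope he h
    rw [abs_sub_comm, abs_sub_comm y x, abs_of_nonneg this.1, abs_of_nonneg (by linarith)]
    exact this.2

lemma MM_continuous {e : ℝ} (he : 0 ≤ e) : Continuous (MM e) := by
  have : LipschitzWith 1 (MM e) := LipschitzWith.of_dist_le_mul fun x y => by
    simpa [Real.dist_eq] using MM_lip he y x
  exact this.continuous

lemma MM_contDiffAt {p : ℝ × ℝ} (h : 0 < p.1 ∨ 0 < p.2) :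
    ContDiffAt ℝ (⊤ : ℕ∞) (fun p : ℝ × ℝ => MM p.1 p.2) p := by
  have h1 : ContDiffAt ℝ (⊤ : ℕ∞) (fun p : ℝ × ℝ => p.1) p := contDiffAt_fst
  have h2 : ContDiffAt ℝ (⊤ : ℕ∞) (fun p : ℝ × ℝ => p.2) p := contDiffAt_snd
  rcases h with h | h
  · have hg : ContDiff ℝ (⊤ : ℕ∞) expNegInvGlue := expNegInvGlue.contDiff
    have h3 : ContDiffAt ℝ (⊤ : ℕ∞) (fun p : ℝ × ℝ => p.2 * expNegInvGlue (p.2 / p.1)) p :=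
      h2.mul (hg.contDiffAt.comp p (h2.div h1 h.ne'))
    refine h3.congr_of_eventuallyEq ?_
    filter_upwards [continuousAt_fst.eventually (eventually_gt_nhds h)] with r hr
    rcases le_or_gt r.2 0 with h4 | h4
    · rw [MM_of_nonpos h4, expNegInvGlue.zero_of_nonpos (div_nonpos_of_nonpos_of_nonneg h4 hr.le),
        mul_zero]
    · rw [MM_of_pos h4, expNegInvGlue, if_neg (not_le.2 (div_pos h4 hr)), inv_div]
  · have h3 : ContDiffAt ℝ (⊤ : ℕ∞) (fun p : ℝ × ℝ => p.2 * Real.exp (-(p.1 / p.2))) p :=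
      h2.mul ((h1.div h2 h.ne').neg.exp)
    refine h3.congr_of_eventuallyEq ?_
    filter_upwards [continuousAt_snd.eventually (eventually_gt_nhds h)] with r hr
    rw [MM_of_pos hr]

/-- The displacement `m(u, |v|²)` of the slit map. -/
def mA (p : ℝ × ℝ) : ℝ := MM (ee p.1) (Real.sqrt (aa p.1) - Real.sqrt (p.2 + ee p.1))

lemma mA_contDiffAt {u q : ℝ} (hq0 : 0 ≤ q) (hq : q < aa u) (h : u < 0 ∨ 0 < q) :
    ContDiffAt ℝ (⊤ : ℕ∞) mA (u, q) := by
  have ha : 0 < aa u := hq0.trans_lt hq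
  have hqe : 0 < q + ee u := by
    rcases h with h | h
    · have := ee_pos h; linarith
    · have := ee_nonneg u; linarith
  have h1 : ContDiffAt ℝ (⊤ : ℕ∞) (fun p : ℝ × ℝ => ee p.1) (u, q) :=
    ee_contDiff.contDiffAt.comp (u, q) contDiffAt_fst
  have h2 : ContDiffAt ℝ (⊤ : ℕ∞) (fun p : ℝ × ℝ => aa p.1) (u, q) :=
    aa_contDiff.contDiffAt.comp (u, q) contDiffAt_fst
  have h3 : ContDiffAt ℝ (⊤ : ℕ∞) (fun p : ℝ × ℝ => p.2 + ee p.1) (u, q) :=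
    contDiffAt_snd.add h1
  have h4 := (h2.sqrt ha.ne').sub (h3.sqrt hqe.ne')
  have h5 : 0 < ee u ∨ 0 < Real.sqrt (aa u) - Real.sqrt (q + ee u) := by
    rcases lt_or_ge u 0 with hu | hu
    · exact Or.inl (ee_pos hu)
    · right
      rw [ee_zero hu, add_zero, sub_pos]
      exact Real.sqrt_lt_sqrt hq0 hq
  exact (MM_contDiffAt (p := (ee u, Real.sqrt (aa u) - Real.sqrt (q + ee u))) h5).comp
    (u, q) (h1.prodMk h4)

/-- The size of `∂m/∂q`: this is what makes the slit map injective and immersive. -/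
lemma mA_dq {u q : ℝ} (hq0 : 0 ≤ q) (hq : q < aa u) (h : u < 0 ∨ 0 < q) :
    ∃ k, 0 ≤ k ∧ k ≤ 1 ∧ fderiv ℝ mA (u, q) (0, 1) = -k / (2 * Real.sqrt (q + ee u)) := by
  have hqe : 0 < q + ee u := by
    rcases h with h | h
    · have := ee_pos h; linarith
    · have := ee_nonneg u; linarith
  set y := Real.sqrt (aa u) - Real.sqrt (q + ee u) with hy
  have h5 : 0 < ee u ∨ 0 < y := by
    rcases lt_or_ge u 0 with hu | hu
    · exact Or.inl (ee_pos hu)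
    · right
      rw [hy, ee_zero hu, add_zero, sub_pos]
      exact Real.sqrt_lt_sqrt hq0 hq
  have hM : DifferentiableAt ℝ (MM (ee u)) y := by
    have h6 : DifferentiableAt ℝ (fun p : ℝ × ℝ => MM p.1 p.2) (ee u, y) :=
      (MM_contDiffAt (p := (ee u, y)) h5).differentiableAt (by simp)
    exact h6.comp y ((differentiableAt_const (ee u)).prodMk differentiableAt_id)
  have hmono : Monotone (MM (ee u)) := fun x y hxy => by
    linarith [(MM_slope (ee_nonneg u) hxy).1]
  refine ⟨deriv (MM (ee u)) y, hmono.deriv_nonneg, ?_, ?_⟩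
  · have hl : LipschitzWith 1 (MM (ee u)) := LipschitzWith.of_dist_le_mul fun x y => by
      simpa [Real.dist_eq] using MM_lip (ee_nonneg u) y x
    have := norm_deriv_le_of_lipschitz hl (x₀ := y)
    exact (le_abs_self _).trans (by simpa using this)
  · have h7 : HasDerivAt (fun t : ℝ => Real.sqrt (aa u) - Real.sqrt (t + ee u))
        (-(1 / (2 * Real.sqrt (q + ee u)))) q := by
      have := ((hasDerivAt_id' q).add_const (ee u)).sqrt hqe.ne'
      exact this.const_sub _
    have h8 : HasDerivAt (fun t : ℝ => mA (u, t))
        (deriv (MM (ee u)) y * -(1 / (2 * Real.sqrt (q + ee u)))) q :=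
      HasDerivAt.comp (h₂ := MM (ee u)) q hM.hasDerivAt h7
    have h9 : HasDerivAt (fun t : ℝ => mA (u, t)) (fderiv ℝ mA (u, q) (0, 1)) q :=
      ((mA_contDiffAt hq0 hq h).differentiableAt (by simp)).hasFDerivAt.comp_hasDerivAt q
        ((hasDerivAt_const q u).prodMk (hasDerivAt_id' q))
    rw [h9.unique h8]
    ring

/-- The squared radius map `(u, α, v) ↦ (u, |v|²)`. -/
def Qm (s : ℝ × ℝ × ℂ) : ℝ × ℝ := (s.1, Complex.normSq s.2.2)

/-- Source leg of the first correspondence. -/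
def SA (s : ℝ × ℝ × ℂ) : ℝ × ℝ × ℂ := (s.1, s.2.1, s.2.2 + (mA (Qm s) : ℂ))

/-- Target leg of the first correspondence: `v` is rotated by `2 m_q Im v`, and `α` is corrected
by `2 m_u Im v`. -/
def TA (s : ℝ × ℝ × ℂ) : ℝ × ℝ × ℂ :=
  (s.1, s.2.1 + 2 * fderiv ℝ mA (Qm s) (1, 0) * s.2.2.im,
    s.2.2 * Complex.exp ((2 * fderiv ℝ mA (Qm s) (0, 1) * s.2.2.im : ℝ) * Complex.I))

/-- The parameter domain of the first correspondence: for `u ≥ 0` the disc is slit along the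
nonnegative real axis. -/
def SigA : Set (ℝ × ℝ × ℂ) :=
  {s | -(3 / 4) < s.1 ∧ Complex.normSq s.2.2 < aa s.1 ∧ (s.1 < 0 ∨ -s.2.2 ∈ Complex.slitPlane)}

lemma isOpen_SigA : IsOpen SigA := by
  have h1 : Continuous aa := aa_contDiff.continuous
  have h2 : Continuous Complex.normSq := Complex.continuous_normSq
  have e1 : IsOpen {s : ℝ × ℝ × ℂ | -(3 / 4) < s.1} := isOpen_lt (by fun_prop) (by fun_prop)
  have e2 : IsOpen {s : ℝ × ℝ × ℂ | Complex.normSq s.2.2 < aa s.1} :=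
    isOpen_lt (by fun_prop) (by fun_prop)
  have e3 : IsOpen {s : ℝ × ℝ × ℂ | s.1 < 0} := isOpen_lt (by fun_prop) (by fun_prop)
  have e4 : IsOpen {s : ℝ × ℝ × ℂ | -s.2.2 ∈ Complex.slitPlane} :=
    Complex.isOpen_slitPlane.preimage (f := fun s : ℝ × ℝ × ℂ => -s.2.2) (by fun_prop)
  exact e1.inter (e2.inter (e3.union e4))

lemma SigA_cond {s : ℝ × ℝ × ℂ} (hs : s ∈ SigA) : s.1 < 0 ∨ 0 < Complex.normSq s.2.2 := by
  rcases hs.2.2 with h | h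
  · exact Or.inl h
  · refine Or.inr (Complex.normSq_pos.2 ?_)
    have := Complex.slitPlane_ne_zero h
    simpa using this

lemma mA_Qm_contDiffAt {s : ℝ × ℝ × ℂ} (hs : s ∈ SigA) : ContDiffAt ℝ (⊤ : ℕ∞) mA (Qm s) :=
  mA_contDiffAt (Complex.normSq_nonneg _) hs.2.1 (SigA_cond hs)

lemma Qm_contDiff : ContDiff ℝ (⊤ : ℕ∞) Qm := by
  have := normSq_contDiff
  unfold Qm
  fun_prop

/-- `D(|v|²) ξ = 2 Re (v̄ ξ)`. -/
lemma Qm_hasFDerivAt (s : ℝ × ℝ × ℂ) : HasFDerivAt Qm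
    ((ContinuousLinearMap.fst ℝ ℝ (ℝ × ℂ)).prod
      (((2 * s.2.2.re) • Complex.reCLM + (2 * s.2.2.im) • Complex.imCLM).comp
        ((ContinuousLinearMap.snd ℝ ℝ ℂ).comp (ContinuousLinearMap.snd ℝ ℝ (ℝ × ℂ))))) s :=
  (ContinuousLinearMap.fst ℝ ℝ (ℝ × ℂ)).hasFDerivAt.prodMk
    ((hasFDerivAt_normSq s.2.2).comp s
      ((ContinuousLinearMap.snd ℝ ℝ ℂ).comp (ContinuousLinearMap.snd ℝ ℝ (ℝ × ℂ))).hasFDerivAt)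

lemma SA_hasFDerivAt {s : ℝ × ℝ × ℂ} (hs : s ∈ SigA) :
    ContDiffAt ℝ (⊤ : ℕ∞) SA s ∧ ∀ x, fderiv ℝ SA s x =
      (x.1, x.2.1, x.2.2 + ((fderiv ℝ mA (Qm s)
        (x.1, 2 * s.2.2.re * x.2.2.re + 2 * s.2.2.im * x.2.2.im) : ℝ) : ℂ)) := by
  have hm := mA_Qm_contDiffAt hs
  have hmQ : ContDiffAt ℝ (⊤ : ℕ∞) (fun s => mA (Qm s)) s := hm.comp s Qm_contDiff.contDiffAt
  have hd := (hm.differentiableAt (by simp)).hasFDerivAt.comp s (Qm_hasFDerivAt s)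
  constructor
  · have h1 : ContDiffAt ℝ (⊤ : ℕ∞) (fun s : ℝ × ℝ × ℂ => s.1) s := by fun_prop
    have h2 : ContDiffAt ℝ (⊤ : ℕ∞) (fun s : ℝ × ℝ × ℂ => s.2.1) s := by fun_prop
    have h3 : ContDiffAt ℝ (⊤ : ℕ∞) (fun s : ℝ × ℝ × ℂ => s.2.2) s := by fun_prop
    exact h1.prodMk (h2.prodMk (h3.add (Complex.ofRealCLM.contDiff.contDiffAt.comp s hmQ)))
  · intro x
    have h : HasFDerivAt SA _ s := (ContinuousLinearMap.fst ℝ ℝ (ℝ × ℂ)).hasFDerivAt.prodMk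
      (((ContinuousLinearMap.fst ℝ ℝ ℂ).comp (ContinuousLinearMap.snd ℝ ℝ (ℝ × ℂ))).hasFDerivAt.prodMk
      ((((ContinuousLinearMap.snd ℝ ℝ ℂ).comp (ContinuousLinearMap.snd ℝ ℝ (ℝ × ℂ))).hasFDerivAt).add
        (Complex.ofRealCLM.hasFDerivAt.comp s hd)))
    rw [h.fderiv]
    simp

lemma SigA_re_lt {s : ℝ × ℝ × ℂ} (hs : s ∈ SigA) :
    s.2.2.re < Real.sqrt (Complex.normSq s.2.2 + ee s.1) := by
  rcases lt_or_ge s.1 0 with hu | hu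
  · have := ee_pos hu
    apply Real.lt_sqrt_of_sq_lt
    rw [Complex.normSq_apply]; nlinarith [mul_self_nonneg s.2.2.im]
  · have h1 := hs.2.2.resolve_left (not_lt.2 hu)
    rw [Complex.mem_slitPlane_iff] at h1
    simp only [Complex.neg_re, Complex.neg_im] at h1
    rw [ee_zero hu, add_zero]
    rcases lt_or_ge s.2.2.re 0 with h2 | h2
    · exact h2.trans_le (Real.sqrt_nonneg _)
    · have h3 : s.2.2.im ≠ 0 := by
        rcases h1 with h1 | h1
        · linarith
        · simpa using h1
      apply Real.lt_sqrt_of_sq_lt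
      rw [Complex.normSq_apply]
      have := mul_self_pos.2 h3
      nlinarith

/-- `1 + 2 m_q Re v > 0` on the parameter domain. -/
lemma SA_immersion_aux {s : ℝ × ℝ × ℂ} (hs : s ∈ SigA) :
    0 < 1 + 2 * fderiv ℝ mA (Qm s) (0, 1) * s.2.2.re := by
  obtain ⟨k, hk0, hk1, hk⟩ := mA_dq (Complex.normSq_nonneg _) hs.2.1 (SigA_cond hs)
  have hlt := SigA_re_lt hs
  have hpos : 0 < Real.sqrt (Complex.normSq s.2.2 + ee s.1) := by
    apply Real.sqrt_pos.2
    rcases SigA_cond hs with h | h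
    · have := ee_pos h; have := Complex.normSq_nonneg s.2.2; linarith
    · have := ee_nonneg s.1; linarith
  have e : fderiv ℝ mA (Qm s) (0, 1) = -k / (2 * Real.sqrt (Complex.normSq s.2.2 + ee s.1)) := hk
  rw [e]
  set R := Real.sqrt (Complex.normSq s.2.2 + ee s.1)
  have : 1 + 2 * (-k / (2 * R)) * s.2.2.re = (R - k * s.2.2.re) / R := by
    field_simp
    ring
  rw [this]
  apply div_pos _ hpos
  rcases le_or_gt s.2.2.re 0 with h | h <;> nlinarith

lemma SA_injective_fderiv {s : ℝ × ℝ × ℂ} (hs : s ∈ SigA) :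
    Function.Injective (fderiv ℝ SA s) := by
  rw [injective_iff_map_eq_zero]
  intro x hx
  rw [(SA_hasFDerivAt hs).2] at hx
  have h1 : x.1 = 0 := congrArg Prod.fst hx
  have h2 : x.2.1 = 0 := congrArg (fun y => y.2.1) hx
  have h3 : x.2.2 + ((fderiv ℝ mA (Qm s)
        (x.1, 2 * s.2.2.re * x.2.2.re + 2 * s.2.2.im * x.2.2.im) : ℝ) : ℂ) = 0 :=
    congrArg (fun y => y.2.2) hx
  have h4 : x.2.2.im = 0 := by simpa using congrArg Complex.im h3
  have h5 := congrArg Complex.re h3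
  rw [h1, h4] at h5
  have h6 : ((0 : ℝ), 2 * s.2.2.re * x.2.2.re + 2 * s.2.2.im * 0)
      = (2 * s.2.2.re * x.2.2.re) • ((0 : ℝ), (1 : ℝ)) := by simp
  rw [h6, map_smul] at h5
  simp only [Complex.add_re, Complex.ofReal_re, smul_eq_mul, Complex.zero_re] at h5
  have h7 := SA_immersion_aux hs
  have h8 : x.2.2.re = 0 := by
    have h9 : (1 + 2 * fderiv ℝ mA (Qm s) (0, 1) * s.2.2.re) * x.2.2.re = 0 := by
      linear_combination h5
    exact (mul_eq_zero.1 h9).resolve_left h7.ne'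
  exact Prod.ext h1 (Prod.ext h2 (Complex.ext h8 h4))

lemma TA_contDiffAt {s : ℝ × ℝ × ℂ} (hs : s ∈ SigA) : ContDiffAt ℝ (⊤ : ℕ∞) TA s := by
  have hm := mA_Qm_contDiffAt hs
  have hp : ∀ e, ContDiffAt ℝ (⊤ : ℕ∞) (fun s => fderiv ℝ mA (Qm s) e) s := fun e =>
    (contDiffAt_partial hm e).comp s Qm_contDiff.contDiffAt
  have h1 : ContDiffAt ℝ (⊤ : ℕ∞) (fun s : ℝ × ℝ × ℂ => s.1) s := by fun_prop
  have h2 : ContDiffAt ℝ (⊤ : ℕ∞) (fun s : ℝ × ℝ × ℂ => s.2.1) s := by fun_prop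
  have h3 : ContDiffAt ℝ (⊤ : ℕ∞) (fun s : ℝ × ℝ × ℂ => s.2.2) s := by fun_prop
  have h4 : ContDiffAt ℝ (⊤ : ℕ∞) (fun s : ℝ × ℝ × ℂ => s.2.2.im) s :=
    Complex.imCLM.contDiff.contDiffAt.comp s h3
  exact h1.prodMk ((h2.add ((contDiffAt_const.mul (hp _)).mul h4)).prodMk
    (contDiffAt_twist h3 ((contDiffAt_const.mul (hp _)).mul h4)))

/-- Both legs of the first correspondence induce the form `Om + dm ∧ d(Im v)`; for the target leg
this uses `du ∧ dm_u + dq ∧ dm_q = 0`. -/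
lemma SA_TA_form {s : ℝ × ℝ × ℂ} (hs : s ∈ SigA) (x y : ℝ × ℝ × ℂ) :
    Om (fderiv ℝ TA s x) (fderiv ℝ TA s y) = Om (fderiv ℝ SA s x) (fderiv ℝ SA s y) := by
  have hm := mA_Qm_contDiffAt hs
  have hp : ∀ e, HasFDerivAt (fun s => fderiv ℝ mA (Qm s) e) _ s := fun e =>
    ((contDiffAt_partial hm e).differentiableAt (by simp)).hasFDerivAt.comp s (Qm_hasFDerivAt s)
  set L3 : (ℝ × ℝ × ℂ) →L[ℝ] ℂ :=
    (ContinuousLinearMap.snd ℝ ℝ ℂ).comp (ContinuousLinearMap.snd ℝ ℝ (ℝ × ℂ)) with hL3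
  have h3 : HasFDerivAt (fun s : ℝ × ℝ × ℂ => s.2.2) L3 s := L3.hasFDerivAt
  have h4 : HasFDerivAt (fun s : ℝ × ℝ × ℂ => s.2.2.im) (Complex.imCLM.comp L3) s :=
    Complex.imCLM.hasFDerivAt.comp s h3
  have hA : HasFDerivAt (fun s => 2 * fderiv ℝ mA (Qm s) (1, 0) * s.2.2.im) _ s :=
    ((hp (1, 0)).const_mul 2).mul h4
  have hB : HasFDerivAt (fun s => 2 * fderiv ℝ mA (Qm s) (0, 1) * s.2.2.im) _ s :=
    ((hp (0, 1)).const_mul 2).mul h4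
  have hw := twist_form h3.differentiableAt hB.differentiableAt x y
  have hwd : DifferentiableAt ℝ (fun s : ℝ × ℝ × ℂ => s.2.2 * Complex.exp
      ((2 * fderiv ℝ mA (Qm s) (0, 1) * s.2.2.im : ℝ) * Complex.I)) s := by
    have hb : ContDiffAt ℝ (⊤ : ℕ∞) (fun s : ℝ × ℝ × ℂ =>
        2 * fderiv ℝ mA (Qm s) (0, 1) * s.2.2.im) s :=
      (contDiffAt_const.mul ((contDiffAt_partial hm _).comp s Qm_contDiff.contDiffAt)).mul
        (Complex.imCLM.contDiff.contDiffAt.comp s L3.contDiff.contDiffAt)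
    exact (contDiffAt_twist L3.contDiff.contDiffAt hb).differentiableAt (by simp)
  have hT : HasFDerivAt TA _ s := (ContinuousLinearMap.fst ℝ ℝ (ℝ × ℂ)).hasFDerivAt.prodMk
      ((((ContinuousLinearMap.fst ℝ ℝ ℂ).comp
        (ContinuousLinearMap.snd ℝ ℝ (ℝ × ℂ))).hasFDerivAt.add hA).prodMk hwd.hasFDerivAt)
  rw [hT.fderiv, (SA_hasFDerivAt hs).2, (SA_hasFDerivAt hs).2]
  rw [h3.fderiv, hB.fderiv] at hw
  simp only [Om, ContinuousLinearMap.prod_apply]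
  rw [hw]
  -- expand everything in terms of the partial derivatives of `m`
  have hlin : ∀ a b : ℝ, fderiv ℝ mA (Qm s) (a, b)
      = a * fderiv ℝ mA (Qm s) (1, 0) + b * fderiv ℝ mA (Qm s) (0, 1) := by
    intro a b
    have : (a, b) = a • ((1 : ℝ), (0 : ℝ)) + b • ((0 : ℝ), (1 : ℝ)) := by simp
    rw [this, map_add, map_smul, map_smul]
    simp
  have hH : ∀ X Y : ℝ × ℝ, X.1 * fderiv ℝ (fderiv ℝ mA) (Qm s) Y (1, 0)
      + X.2 * fderiv ℝ (fderiv ℝ mA) (Qm s) Y (0, 1) = fderiv ℝ (fderiv ℝ mA) (Qm s) Y X := by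
    intro X Y
    have : X = X.1 • ((1 : ℝ), (0 : ℝ)) + X.2 • ((0 : ℝ), (1 : ℝ)) := by ext <;> simp
    conv_rhs => rw [this]
    rw [map_add, map_smul, map_smul]
    simp
  set X : ℝ × ℝ := (x.1, 2 * s.2.2.re * x.2.2.re + 2 * s.2.2.im * x.2.2.im) with hX
  set Y : ℝ × ℝ := (y.1, 2 * s.2.2.re * y.2.2.re + 2 * s.2.2.im * y.2.2.im) with hY
  have hsym := hessian_symm hm X Y
  rw [← hH X Y, ← hH Y X] at hsym
  rw [hlin X.1 X.2, hlin Y.1 Y.2]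
  simp [ar_eq, hL3, fderiv_partial hm]
  rw [← hX, ← hY]
  simp only [hX, hY] at hsym ⊢
  linear_combination (-s.2.2.im) * hsym

/-! ### Bijectivity of the first correspondence -/

lemma mA_nonneg (p : ℝ × ℝ) : 0 ≤ mA p := MM_nonneg _ _

/-- The source leg stays in the disc `|w|² < a(u)`. -/
lemma SA_mem {s : ℝ × ℝ × ℂ} (hs : s ∈ SigA) : Complex.normSq (SA s).2.2 < aa s.1 := by
  have hre := SigA_re_lt hs
  set Q := Real.sqrt (Complex.normSq s.2.2 + ee s.1) with hQ
  have hq0 := Complex.normSq_nonneg s.2.2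
  have hQ2 : Q ^ 2 = Complex.normSq s.2.2 + ee s.1 := by
    apply Real.sq_sqrt
    linarith [ee_nonneg s.1]
  have ha : 0 < aa s.1 := hq0.trans_lt hs.2.1
  have hex : Complex.normSq (SA s).2.2
      = Complex.normSq s.2.2 + 2 * mA (Qm s) * s.2.2.re + mA (Qm s) ^ 2 := by
    simp only [SA, Complex.normSq_apply, Complex.add_re, Complex.add_im, Complex.ofReal_re,
      Complex.ofReal_im]
    ring
  rw [hex]
  rcases (mA_nonneg (Qm s)).eq_or_lt with h0 | h0
  · rw [← h0]; have := hs.2.1; linarith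
  · have hy : 0 < Real.sqrt (aa s.1) - Q := by
      by_contra hcon
      have : mA (Qm s) = 0 := MM_of_nonpos (not_lt.1 hcon)
      linarith
    have hle : mA (Qm s) ≤ Real.sqrt (aa s.1) - Q := MM_le (ee_nonneg s.1) hy
    have hr2 : Real.sqrt (aa s.1) ^ 2 = aa s.1 := Real.sq_sqrt ha.le
    have hQ0 : 0 ≤ Q := Real.sqrt_nonneg _
    have := ee_nonneg s.1
    nlinarith

lemma SA_injOn {s s' : ℝ × ℝ × ℂ} (hs : s ∈ SigA) (hs' : s' ∈ SigA) (h : SA s = SA s') :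
    s = s' := by
  obtain ⟨u, α, v⟩ := s
  obtain ⟨u', α', v'⟩ := s'
  have h1 : u = u' := congrArg Prod.fst h
  have h2 : α = α' := congrArg (fun y => y.2.1) h
  have h3 : v + (mA (Qm (u, α, v)) : ℂ) = v' + (mA (Qm (u', α', v')) : ℂ) :=
    congrArg (fun y => y.2.2) h
  subst h1 h2
  simp only [Qm] at h3
  have him : v.im = v'.im := by simpa using congrArg Complex.im h3
  have hre : v.re + mA (u, Complex.normSq v) = v'.re + mA (u, Complex.normSq v') := by
    simpa using congrArg Complex.re h3
  have hq := Complex.normSq_nonneg v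
  have hq' := Complex.normSq_nonneg v'
  have hee := ee_nonneg u
  have hr := SigA_re_lt hs
  have hr' := SigA_re_lt hs'
  simp only at hr hr'
  set Q := Real.sqrt (Complex.normSq v + ee u) with hQ
  set Q' := Real.sqrt (Complex.normSq v' + ee u) with hQ'
  have hQ2 : Q ^ 2 = Complex.normSq v + ee u := Real.sq_sqrt (by linarith)
  have hQ2' : Q' ^ 2 = Complex.normSq v' + ee u := Real.sq_sqrt (by linarith)
  have hQ0 : 0 ≤ Q := Real.sqrt_nonneg _
  have hQ0' : 0 ≤ Q' := Real.sqrt_nonneg _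
  -- the real parts differ by at most `|Q - Q'|`
  have hlip : |v.re - v'.re| ≤ |Q - Q'| := by
    have := MM_lip hee (Real.sqrt (aa u) - Q') (Real.sqrt (aa u) - Q)
    have e1 : mA (u, Complex.normSq v) = MM (ee u) (Real.sqrt (aa u) - Q) := rfl
    have e2 : mA (u, Complex.normSq v') = MM (ee u) (Real.sqrt (aa u) - Q') := rfl
    have e3 : v.re - v'.re = -(MM (ee u) (Real.sqrt (aa u) - Q)
        - MM (ee u) (Real.sqrt (aa u) - Q')) := by rw [← e1, ← e2]; linarith
    rw [e3, abs_neg]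
    refine this.trans ?_
    rw [abs_sub_comm Q Q']
    apply le_of_eq; congr 1; ring
  -- but `Q² - Q'² = re² - re'²` while `|re| < Q`
  have hdiff : (Q - Q') * (Q + Q') = (v.re - v'.re) * (v.re + v'.re) := by
    rw [Complex.normSq_apply] at hQ2 hQ2'
    rw [him] at hQ2
    nlinarith
  have hge : ∀ w : ℂ, -w.re ≤ Real.sqrt (Complex.normSq w + ee u) := by
    intro w
    apply Real.le_sqrt_of_sq_le
    rw [Complex.normSq_apply]; nlinarith [mul_self_nonneg w.im]
  have hrev : v.re = v'.re := by
    by_contra hne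
    have g1 := hge v
    have g2 := hge v'
    have g1' : -v.re ≤ Q := g1
    have g2' : -v'.re ≤ Q' := g2
    have hsum1 : v.re + v'.re < Q + Q' := by linarith
    have hsumpos : 0 ≤ Q + Q' := by linarith
    have hsum2 : -(v.re + v'.re) ≤ Q + Q' := by linarith
    -- the strict case of both signs
    rcases eq_or_lt_of_le hsum2 with heq | hlt
    · -- both points lie on the negative axis with `e = 0`, where `m = ρ - |v|`
      have hQv : Q = -v.re := by linarith
      have hQv' : Q' = -v'.re := by linarith
      have hu0 : mA (u, Complex.normSq v) - mA (u, Complex.normSq v') = v'.re - v.re := by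
        linarith
      have hQQ : Q - Q' = v'.re - v.re := by linarith
      have e1 : mA (u, Complex.normSq v) = MM (ee u) (Real.sqrt (aa u) - Q) := rfl
      have e2 : mA (u, Complex.normSq v') = MM (ee u) (Real.sqrt (aa u) - Q') := rfl
      rw [e1, e2, ← hQQ] at hu0
      rcases le_total Q Q' with hle | hle
      · have := (MM_slope hee (show Real.sqrt (aa u) - Q' ≤ Real.sqrt (aa u) - Q by linarith)).1
        have : Q = Q' := by linarith
        exact hne (by linarith)
      · have := (MM_slope hee (show Real.sqrt (aa u) - Q ≤ Real.sqrt (aa u) - Q' by linarith)).1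
        have : Q = Q' := by linarith
        exact hne (by linarith)
    · have habs : |v.re + v'.re| < Q + Q' := abs_lt.2 ⟨by linarith, hsum1⟩
      have hpos : 0 < |v.re - v'.re| := abs_pos.2 (sub_ne_zero.2 hne)
      have h5 : |Q - Q'| * (Q + Q') = |v.re - v'.re| * |v.re + v'.re| := by
        rw [← abs_mul, ← hdiff, abs_mul, abs_of_nonneg hsumpos]
      nlinarith
  have : v = v' := Complex.ext hrev him
  rw [this]

lemma mA_continuous (u : ℝ) : Continuous fun q => mA (u, q) := by
  have h := MM_continuous (ee_nonneg u)
  exact h.comp (by fun_prop : Continuous fun q => Real.sqrt (aa u) - Real.sqrt (q + ee u))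

lemma SA_surj {u : ℝ} (α : ℝ) {w : ℂ} (hu : -(3 / 4) < u) (hw : Complex.normSq w < aa u) :
    ∃ v, (u, α, v) ∈ SigA ∧ SA (u, α, v) = (u, α, w) := by
  have ha : 0 < aa u := (Complex.normSq_nonneg w).trans_lt hw
  set ρ := Real.sqrt (aa u) with hρ
  have hρ0 : 0 < ρ := Real.sqrt_pos.2 ha
  have hρ2 : ρ ^ 2 = aa u := Real.sq_sqrt ha.le
  have hnorm : ‖w‖ < ρ := by
    rw [Complex.normSq_eq_norm_sq] at hw
    exact Real.lt_sqrt_of_sq_lt hw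
  set f : ℝ → ℝ := fun R => ‖w - (mA (u, R ^ 2) : ℂ)‖ - R with hf
  have hfc : Continuous f := by
    have h1 : Continuous fun R : ℝ => mA (u, R ^ 2) := (mA_continuous u).comp (by fun_prop)
    have h2 : Continuous fun R : ℝ => ((mA (u, R ^ 2) : ℝ) : ℂ) := Complex.continuous_ofReal.comp h1
    fun_prop
  have hm : mA (u, ρ ^ 2) = 0 := by
    apply MM_of_nonpos
    have : Real.sqrt (aa u) ≤ Real.sqrt (ρ ^ 2 + ee u) :=
      Real.sqrt_le_sqrt (by rw [hρ2]; linarith [ee_nonneg u])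
    simp only
    linarith
  have hfρ : f ρ < 0 := by
    simp only [hf, hm]; simp; linarith
  have hf0 : 0 ≤ f 0 := by simp [hf]
  obtain ⟨R, hR, hfR⟩ := intermediate_value_Icc' hρ0.le hfc.continuousOn
    (show (0 : ℝ) ∈ Icc (f ρ) (f 0) from ⟨hfρ.le, hf0⟩)
  have hRρ : R < ρ := lt_of_le_of_ne hR.2 (fun h => by rw [h] at hfR; linarith)
  set v : ℂ := w - (mA (u, R ^ 2) : ℂ) with hv
  have hvR : ‖v‖ = R := by simp only [hf] at hfR; linarith
  have hq : Complex.normSq v = R ^ 2 := by rw [Complex.normSq_eq_norm_sq, hvR]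
  refine ⟨v, ⟨hu, ?_, ?_⟩, ?_⟩
  · simp only [hq]; rw [← hρ2]; nlinarith [hR.1]
  · rcases lt_or_ge u 0 with h0 | h0
    · exact Or.inl h0
    · right
      simp only
      -- for `u ≥ 0` the displacement is `ρ - R`, so `Re v = Re w - ρ + R < R = |v|`
      have hmR : mA (u, R ^ 2) = ρ - R := by
        have e : mA (u, R ^ 2) = MM (ee u) (ρ - Real.sqrt (R ^ 2 + ee u)) := rfl
        rw [e, ee_zero h0, add_zero, Real.sqrt_sq hR.1, MM_of_pos (by linarith)]
        simp
      have hre : v.re < ‖v‖ := by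
        have : v.re = w.re - (ρ - R) := by rw [hv, hmR]; simp
        have := Complex.re_le_norm w
        linarith
      rw [Complex.mem_slitPlane_iff]
      by_contra hcon
      push Not at hcon
      simp only [Complex.neg_re, Complex.neg_im] at hcon
      have h1 : 0 ≤ v.re := by linarith [hcon.1]
      have h2 : v.im = 0 := by linarith [hcon.2]
      have h3 : v = (v.re : ℂ) := Complex.ext rfl (by simp [h2])
      rw [h3, Complex.norm_real, Complex.ofReal_re, Real.norm_of_nonneg h1] at hre
      exact lt_irrefl _ hre
  · have : v + (mA (u, Complex.normSq v) : ℂ) = w := by rw [hq, hv]; ring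
    simp only [SA, Qm, this]

/-- The strict contraction property of the sine. -/
lemma abs_sin_sub_sin_lt {x y : ℝ} (h : x ≠ y) : |Real.sin x - Real.sin y| < |x - y| := by
  rw [Real.sin_sub_sin, abs_mul, abs_mul]
  have hne : (x - y) / 2 ≠ 0 := by
    intro h0; apply h; linarith
  have h1 : |Real.sin ((x - y) / 2)| < |(x - y) / 2| := Real.abs_sin_lt_abs hne
  have h2 := Real.abs_cos_le_one ((x + y) / 2)
  have h3 : |(x - y) / 2| = |x - y| / 2 := by rw [abs_div]; norm_num
  rw [h3] at h1
  have h4 : |(2 : ℝ)| = 2 := by norm_num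
  rw [h4]
  have h5 := abs_nonneg (Real.sin ((x - y) / 2))
  have h6 := abs_nonneg (Real.cos ((x + y) / 2))
  nlinarith

lemma angle_inj {κ x y : ℝ} (h0 : 0 ≤ κ) (h1 : κ ≤ 1)
    (h : x + κ * Real.sin x = y + κ * Real.sin y) : x = y := by
  by_contra hne
  have h2 := abs_sin_sub_sin_lt hne
  have h3 : |x - y| = κ * |Real.sin x - Real.sin y| := by
    have h4 : x - y = -(κ * (Real.sin x - Real.sin y)) := by linarith
    rw [h4, abs_neg, abs_mul, abs_of_nonneg h0]
  have := abs_nonneg (Real.sin x - Real.sin y)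
  nlinarith

lemma angle_range {κ x : ℝ} (h0 : 0 ≤ κ) (h1 : κ ≤ 1) (hx : x ∈ Ioo (-π) π) :
    x + κ * Real.sin x ∈ Ioo (-π) π := by
  have e1 : Real.sin x < π - x := by
    have := Real.sin_lt (show 0 < π - x by linarith [hx.2])
    rwa [Real.sin_pi_sub] at this
  have e2 : -Real.sin x < π + x := by
    have := Real.sin_lt (show 0 < x + π by linarith [hx.1])
    rw [Real.sin_add_pi] at this
    linarith
  have := hx.1
  have := hx.2
  constructor
  · rcases le_or_gt 0 (Real.sin x) with h | h <;> nlinarith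
  · rcases le_or_gt 0 (Real.sin x) with h | h <;> nlinarith

lemma neg_polar (w : ℂ) :
    w = (-(‖w‖ : ℂ)) * Complex.exp ((Complex.arg (-w) : ℝ) * Complex.I) := by
  have := Complex.norm_mul_exp_arg_mul_I (-w)
  rw [norm_neg] at this
  rw [neg_mul, this, neg_neg]

lemma arg_neg_polar {R θ : ℝ} (hR : 0 < R) (hθ : θ ∈ Ioc (-π) π) :
    Complex.arg (-((-(R : ℂ)) * Complex.exp (θ * Complex.I))) = θ := by
  rw [neg_mul, neg_neg, Complex.exp_mul_I]
  exact Complex.arg_mul_cos_add_sin_mul_I hR hθ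

lemma slit_iff {w : ℂ} : -w ∈ Complex.slitPlane ↔ w ≠ 0 ∧ Complex.arg (-w) ≠ π := by
  rw [Complex.mem_slitPlane_iff_arg]
  simp [and_comm]

/-- The rotation coefficient of the target leg: the angle `φ` of `-v` becomes `φ + κ sin φ`. -/
def kap (p : ℝ × ℝ) : ℝ := -2 * Real.sqrt p.2 * fderiv ℝ mA p (0, 1)

lemma kap_mem {s : ℝ × ℝ × ℂ} (hs : s ∈ SigA) : 0 ≤ kap (Qm s) ∧ kap (Qm s) ≤ 1 := by
  obtain ⟨k, hk0, hk1, hk⟩ := mA_dq (Complex.normSq_nonneg _) hs.2.1 (SigA_cond hs)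
  have hq0 := Complex.normSq_nonneg s.2.2
  have hpos : 0 < Real.sqrt (Complex.normSq s.2.2 + ee s.1) := by
    apply Real.sqrt_pos.2
    rcases SigA_cond hs with h | h
    · have := ee_pos h; linarith
    · have := ee_nonneg s.1; linarith
  have hle : Real.sqrt (Complex.normSq s.2.2) ≤ Real.sqrt (Complex.normSq s.2.2 + ee s.1) :=
    Real.sqrt_le_sqrt (by linarith [ee_nonneg s.1])
  have e : kap (Qm s) = k * Real.sqrt (Complex.normSq s.2.2)
      / Real.sqrt (Complex.normSq s.2.2 + ee s.1) := by
    simp only [kap, Qm]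
    rw [hk]
    field_simp
  have h0 := Real.sqrt_nonneg (Complex.normSq s.2.2)
  rw [e]
  constructor
  · positivity
  · rw [div_le_one hpos]; nlinarith

lemma TA_polar (s : ℝ × ℝ × ℂ) : (TA s).2.2 = (-(‖s.2.2‖ : ℂ)) * Complex.exp
    ((Complex.arg (-s.2.2) + kap (Qm s) * Real.sin (Complex.arg (-s.2.2)) : ℝ) * Complex.I) := by
  have h1 : s.2.2.im = -(‖s.2.2‖ * Real.sin (Complex.arg (-s.2.2))) := by
    have := Complex.norm_mul_sin_arg (-s.2.2)
    rw [norm_neg] at this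
    rw [this]; simp
  have h2 : 2 * fderiv ℝ mA (Qm s) (0, 1) * s.2.2.im
      = kap (Qm s) * Real.sin (Complex.arg (-s.2.2)) := by
    have h3 : Real.sqrt (Qm s).2 = ‖s.2.2‖ := by
      simp only [Qm]; rw [Complex.normSq_eq_norm_sq, Real.sqrt_sq (norm_nonneg _)]
    rw [h1, kap, h3]; ring
  simp only [TA]
  rw [h2]
  rw [Complex.ofReal_add, add_mul, Complex.exp_add, ← mul_assoc, ← neg_polar]

lemma TA_norm (s : ℝ × ℝ × ℂ) : ‖(TA s).2.2‖ = ‖s.2.2‖ := norm_mul_exp _ _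

lemma TA_normSq (s : ℝ × ℝ × ℂ) : Complex.normSq (TA s).2.2 = Complex.normSq s.2.2 := by
  rw [Complex.normSq_eq_norm_sq, Complex.normSq_eq_norm_sq, TA_norm]

lemma TA_arg {s : ℝ × ℝ × ℂ} (hs : s ∈ SigA) (h0 : s.2.2 ≠ 0) : Complex.arg (-(TA s).2.2)
    = Complex.arg (-s.2.2) + kap (Qm s) * Real.sin (Complex.arg (-s.2.2)) := by
  rw [TA_polar s]
  apply arg_neg_polar (norm_pos_iff.2 h0)
  obtain ⟨k0, k1⟩ := kap_mem hs
  rcases eq_or_ne (Complex.arg (-s.2.2)) π with h | h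
  · rw [h]; simp [Real.pi_pos]
  · have h3 := Complex.arg_mem_Ioc (-s.2.2)
    exact Ioo_subset_Ioc_self (angle_range k0 k1 ⟨h3.1, lt_of_le_of_ne h3.2 h⟩)

/-- The target leg preserves the slit disc. -/
lemma TA_mem {s : ℝ × ℝ × ℂ} (hs : s ∈ SigA) : TA s ∈ SigA := by
  refine ⟨hs.1, ?_, ?_⟩
  · rw [TA_normSq]; exact hs.2.1
  · rcases hs.2.2 with h | h
    · exact Or.inl h
    · right
      rw [slit_iff] at h ⊢
      refine ⟨?_, ?_⟩
      · rw [← norm_pos_iff, TA_norm]; exact norm_pos_iff.2 h.1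
      · rw [TA_arg hs h.1]
        obtain ⟨k0, k1⟩ := kap_mem hs
        have h3 := Complex.arg_mem_Ioc (-s.2.2)
        exact (angle_range k0 k1 ⟨h3.1, lt_of_le_of_ne h3.2 h.2⟩).2.ne

lemma TA_injOn {s s' : ℝ × ℝ × ℂ} (hs : s ∈ SigA) (hs' : s' ∈ SigA) (h : TA s = TA s') :
    s = s' := by
  have h1 : (TA s).1 = (TA s').1 := by rw [h]
  change s.1 = s'.1 at h1
  have hw : (TA s).2.2 = (TA s').2.2 := by rw [h]
  have hn : ‖s.2.2‖ = ‖s'.2.2‖ := by rw [← TA_norm s, ← TA_norm s', hw]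
  have hQ : Qm s = Qm s' := by
    simp only [Qm, h1, Complex.normSq_eq_norm_sq, hn]
  have hv : s.2.2 = s'.2.2 := by
    by_cases h0 : s.2.2 = 0
    · rw [h0, norm_zero] at hn
      rw [h0, norm_eq_zero.1 hn.symm]
    · have h0' : s'.2.2 ≠ 0 := by
        rw [← norm_pos_iff, ← hn]; exact norm_pos_iff.2 h0
      have ha := TA_arg hs h0
      rw [hw, TA_arg hs' h0', hQ] at ha
      obtain ⟨k0, k1⟩ := kap_mem hs'
      have := angle_inj k0 k1 ha
      rw [neg_polar s.2.2, neg_polar s'.2.2, hn, this]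
  have h2 : s.2.1 = s'.2.1 := by
    have h3 : (TA s).2.1 = (TA s').2.1 := by rw [h]
    simp only [TA, hQ, hv] at h3
    linarith
  exact Prod.ext h1 (Prod.ext h2 hv)

lemma mA_eventually_zero {u q : ℝ} (h : aa u < q + ee u) :
    mA =ᶠ[𝓝 (u, q)] fun _ => 0 := by
  have h1 : Continuous ee := ee_contDiff.continuous
  have h2 : Continuous aa := aa_contDiff.continuous
  have ho : IsOpen {p : ℝ × ℝ | aa p.1 < p.2 + ee p.1} := isOpen_lt (by fun_prop) (by fun_prop)
  filter_upwards [ho.mem_nhds h] with p hp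
  apply MM_of_nonpos
  have : Real.sqrt (aa p.1) ≤ Real.sqrt (p.2 + ee p.1) := Real.sqrt_le_sqrt (le_of_lt hp)
  linarith

/-- Where the regularisation has closed the hole, both legs are the identity. -/
lemma SA_TA_trivial {s : ℝ × ℝ × ℂ} (h : aa s.1 < Complex.normSq s.2.2 + ee s.1) :
    SA s = s ∧ TA s = s := by
  have h1 := mA_eventually_zero h
  have h2 : mA (Qm s) = 0 := h1.eq_of_nhds
  have h3 : fderiv ℝ mA (Qm s) = 0 := by
    have : fderiv ℝ mA (s.1, Complex.normSq s.2.2) = _ := h1.fderiv_eq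
    rw [fderiv_fun_const] at this
    exact this
  constructor
  · simp [SA, h2]
  · simp [TA, h3]

/-! ### Generating function of the second correspondence -/

/-- The smooth transition function is globally Lipschitz. -/
lemma smoothTransition_lip :
    ∃ K : ℝ, ∀ x y : ℝ, |Real.smoothTransition x - Real.smoothTransition y| ≤ K * |x - y| := by
  have hc : ContDiff ℝ 1 Real.smoothTransition := Real.smoothTransition.contDiff
  have hdc : Continuous (deriv Real.smoothTransition) := hc.continuous_deriv le_rfl
  obtain ⟨K, hK⟩ := isCompact_Icc.exists_bound_of_continuousOn
    (hdc.continuousOn (s := Icc (-1 : ℝ) 2))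
  refine ⟨max K 0, fun x y => ?_⟩
  have hb : ∀ z ∈ (univ : Set ℝ), ‖deriv Real.smoothTransition z‖ ≤ max K 0 := by
    intro z _
    by_cases hz : z ∈ Icc (-1 : ℝ) 2
    · exact (hK z hz).trans (le_max_left _ _)
    · have : deriv Real.smoothTransition z = 0 := by
        rw [mem_Icc, not_and_or, not_le, not_le] at hz
        rcases hz with hz | hz
        · have e : Real.smoothTransition =ᶠ[𝓝 z] fun _ => 0 := by
            filter_upwards [eventually_lt_nhds hz] with t ht
            exact Real.smoothTransition.zero_of_nonpos (by linarith)
          rw [e.deriv_eq]; simp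
        · have e : Real.smoothTransition =ᶠ[𝓝 z] fun _ => 1 := by
            filter_upwards [eventually_gt_nhds hz] with t ht
            exact Real.smoothTransition.one_of_one_le (by linarith)
          rw [e.deriv_eq]; simp
      rw [this, norm_zero]
      exact le_max_right _ _
  have := convex_univ.norm_image_sub_le_of_norm_deriv_le
    (fun z _ => (hc.differentiable (by simp)).differentiableAt) hb (mem_univ y) (mem_univ x)
  simpa [Real.norm_eq_abs] using this

lemma exists_cB : ∃ c : ℝ, 3 ≤ c ∧
    ∀ x y : ℝ, |Real.smoothTransition x - Real.smoothTransition y| ≤ c / 20 * |x - y| := by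
  obtain ⟨K, hK⟩ := smoothTransition_lip
  refine ⟨max 3 (20 * K), le_max_left _ _, fun x y => (hK x y).trans ?_⟩
  apply mul_le_mul_of_nonneg_right _ (abs_nonneg _)
  have := le_max_right 3 (20 * K)
  linarith

/-- A large constant fixing the width of the cut-off. -/
def cB : ℝ := exists_cB.choose

lemma cB_ge : 3 ≤ cB := exists_cB.choose_spec.1

lemma cB_lip (x y : ℝ) :
    |Real.smoothTransition x - Real.smoothTransition y| ≤ cB / 20 * |x - y| :=
  exists_cB.choose_spec.2 x y

/-- A cut-off in `b` of width of order `√(-u)`, degenerating to the constant `1` for `u ≥ 0`. -/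
def zz (u b : ℝ) : ℝ :=
  if u < 0 then Real.smoothTransition (b / (cB * Real.sqrt (-u)) - 1) else 1

lemma zz_of_nonneg {u : ℝ} (h : 0 ≤ u) (b : ℝ) : zz u b = 1 := if_neg (not_lt.2 h)

lemma zz_of_neg {u : ℝ} (h : u < 0) (b : ℝ) :
    zz u b = Real.smoothTransition (b / (cB * Real.sqrt (-u)) - 1) := if_pos h

lemma cB_sqrt_pos {u : ℝ} (h : u < 0) : 0 < cB * Real.sqrt (-u) :=
  mul_pos (by linarith [cB_ge]) (Real.sqrt_pos.2 (by linarith))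

lemma zz_abs_le (u b : ℝ) : |zz u b| ≤ 1 := by
  unfold zz
  split_ifs
  · rw [abs_of_nonneg (Real.smoothTransition.nonneg _)]
    exact Real.smoothTransition.le_one _
  · simp

lemma zz_zero {u b : ℝ} (h : u < 0) (hb : b ≤ cB * Real.sqrt (-u)) : zz u b = 0 := by
  rw [zz_of_neg h]
  apply Real.smoothTransition.zero_of_nonpos
  rw [sub_nonpos, div_le_one (cB_sqrt_pos h)]
  exact hb

lemma zz_one {u b : ℝ} (hb : 2 * (cB * Real.sqrt (-u)) ≤ b) : zz u b = 1 := by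
  rcases lt_or_ge u 0 with h | h
  · rw [zz_of_neg h]
    apply Real.smoothTransition.one_of_one_le
    have : 2 ≤ b / (cB * Real.sqrt (-u)) := by
      rw [le_div_iff₀ (cB_sqrt_pos h)]; exact hb
    linarith
  · exact zz_of_nonneg h b

lemma zz_lip {u : ℝ} (h : u < 0) (b b' : ℝ) :
    |zz u b - zz u b'| ≤ 1 / (20 * Real.sqrt (-u)) * |b - b'| := by
  rw [zz_of_neg h, zz_of_neg h]
  refine (cB_lip _ _).trans ?_
  have hs : 0 < Real.sqrt (-u) := Real.sqrt_pos.2 (by linarith)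
  have hc : 0 < cB := by linarith [cB_ge]
  have e : b / (cB * Real.sqrt (-u)) - 1 - (b' / (cB * Real.sqrt (-u)) - 1)
      = (b - b') / (cB * Real.sqrt (-u)) := by ring
  rw [e, abs_div, abs_of_pos (cB_sqrt_pos h)]
  apply le_of_eq
  field_simp

lemma zz_contDiffAt {x : ℝ × ℝ} (h : x.1 ≠ 0 ∨ 0 < x.2) :
    ContDiffAt ℝ (⊤ : ℕ∞) (fun x : ℝ × ℝ => zz x.1 x.2) x := by
  by_cases hu : x.1 < 0
  · have h1 : ContDiffAt ℝ (⊤ : ℕ∞) (fun x : ℝ × ℝ => -x.1) x := contDiffAt_fst.neg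
    have h2 : ContDiffAt ℝ (⊤ : ℕ∞) (fun x : ℝ × ℝ => x.2 / (cB * Real.sqrt (-x.1)) - 1) x :=
      (contDiffAt_snd.div (contDiffAt_const.mul (h1.sqrt (by linarith)))
        (cB_sqrt_pos hu).ne').sub contDiffAt_const
    have h3 : ContDiff ℝ (⊤ : ℕ∞) Real.smoothTransition := Real.smoothTransition.contDiff
    refine (h3.contDiffAt.comp x h2).congr_of_eventuallyEq ?_
    filter_upwards [continuousAt_fst.eventually (eventually_lt_nhds hu)] with y hy
    exact zz_of_neg hy _
  · refine (contDiffAt_const (c := (1 : ℝ))).congr_of_eventuallyEq ?_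
    rcases lt_or_eq_of_le (not_lt.1 hu) with hu | hu
    · filter_upwards [continuousAt_fst.eventually (eventually_gt_nhds hu)] with y hy
      exact zz_of_nonneg (le_of_lt hy) _
    · have hb := h.resolve_left (not_not.2 hu.symm)
      have ho : IsOpen {y : ℝ × ℝ | 2 * (cB * Real.sqrt (-y.1)) < y.2} :=
        isOpen_lt (by fun_prop) (by fun_prop)
      have hx : x ∈ {y : ℝ × ℝ | 2 * (cB * Real.sqrt (-y.1)) < y.2} := by
        simp [← hu, hb]
      filter_upwards [ho.mem_nhds hx] with y hy
      exact zz_one (le_of_lt hy)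

/-- Cut-off in the radial variable, supported in `0 < p < a(u)` for `u < 0`. -/
def cc (u p : ℝ) : ℝ := zz u (p * (aa u - p))

/-- The angle, cut off near `±π` for `u < 0`. -/
def HH (u θ : ℝ) : ℝ := θ * zz u (1 + Real.cos θ)

/-- The generating function `u c(u, p) H(u, θ)`; it equals `u θ` for `u ≥ 0`, which generates the
shift `p ↦ p + u`. -/
def SS (x : ℝ × ℝ × ℝ) : ℝ := x.1 * cc x.1 x.2.1 * HH x.1 x.2.2

lemma one_add_cos_pos {θ : ℝ} (h : |θ| < π) : 0 < 1 + Real.cos θ := by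
  have := Real.cos_lt_cos_of_nonneg_of_le_pi (abs_nonneg θ) le_rfl h
  rw [Real.cos_pi, Real.cos_abs] at this
  linarith

lemma SS_contDiffAt {u p θ : ℝ} (h : u ≠ 0 ∨ (0 < p ∧ p < aa u ∧ |θ| < π)) :
    ContDiffAt ℝ (⊤ : ℕ∞) SS (u, p, θ) := by
  have hu : ContDiffAt ℝ (⊤ : ℕ∞) (fun x : ℝ × ℝ × ℝ => x.1) (u, p, θ) := by fun_prop
  have hp : ContDiffAt ℝ (⊤ : ℕ∞) (fun x : ℝ × ℝ × ℝ => x.2.1) (u, p, θ) := by fun_prop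
  have hθ : ContDiffAt ℝ (⊤ : ℕ∞) (fun x : ℝ × ℝ × ℝ => x.2.2) (u, p, θ) := by fun_prop
  have ha : ContDiffAt ℝ (⊤ : ℕ∞) (fun x : ℝ × ℝ × ℝ => aa x.1) (u, p, θ) :=
    aa_contDiff.contDiffAt.comp (u, p, θ) hu
  have h1 : ContDiffAt ℝ (⊤ : ℕ∞) (fun x : ℝ × ℝ × ℝ => cc x.1 x.2.1) (u, p, θ) := by
    refine (zz_contDiffAt (x := (u, p * (aa u - p))) ?_).comp (u, p, θ)
      (hu.prodMk (hp.mul (ha.sub hp)))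
    rcases h with h | h
    · exact Or.inl h
    · exact Or.inr (mul_pos h.1 (by linarith))
  have h2 : ContDiffAt ℝ (⊤ : ℕ∞) (fun x : ℝ × ℝ × ℝ => HH x.1 x.2.2) (u, p, θ) := by
    have h3 : ContDiffAt ℝ (⊤ : ℕ∞) (fun x : ℝ × ℝ × ℝ => zz x.1 (1 + Real.cos x.2.2))
        (u, p, θ) := by
      refine (zz_contDiffAt (x := (u, 1 + Real.cos θ)) ?_).comp (u, p, θ)
        (hu.prodMk ((contDiffAt_const (c := (1 : ℝ))).add hθ.cos))
      rcases h with h | h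
      · exact Or.inl h
      · exact Or.inr (one_add_cos_pos h.2.2)
    exact hθ.mul h3
  exact (hu.mul h1).mul h2

lemma cc_of_nonneg {u : ℝ} (h : 0 ≤ u) : cc u = fun _ => 1 := by
  funext p; exact zz_of_nonneg h _

lemma HH_of_nonneg {u : ℝ} (h : 0 ≤ u) : HH u = fun θ => θ := by
  funext θ; simp [HH, zz_of_nonneg h]

lemma zz_differentiable {u : ℝ} (h : u < 0) : Differentiable ℝ (zz u) := by
  intro b
  have := (zz_contDiffAt (x := (u, b)) (Or.inl h.ne)).differentiableAt (by simp)
  exact this.comp b ((differentiableAt_const u).prodMk differentiableAt_id)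

lemma cc_differentiable (u : ℝ) : Differentiable ℝ (cc u) := by
  rcases lt_or_ge u 0 with h | h
  · exact (zz_differentiable h).comp
      (by fun_prop : Differentiable ℝ fun p : ℝ => p * (aa u - p))
  · rw [cc_of_nonneg h]; exact differentiable_const _

lemma HH_differentiable (u : ℝ) : Differentiable ℝ (HH u) := by
  rcases lt_or_ge u 0 with h | h
  · exact differentiable_id.mul ((zz_differentiable h).comp
      (by fun_prop : Differentiable ℝ fun θ : ℝ => 1 + Real.cos θ))
  · rw [HH_of_nonneg h]; exact differentiable_id

lemma SS_dθ {u p θ : ℝ} (h : ContDiffAt ℝ (⊤ : ℕ∞) SS (u, p, θ)) :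
    fderiv ℝ SS (u, p, θ) (0, 0, 1) = u * cc u p * deriv (HH u) θ := by
  have hS : HasFDerivAt SS (fderiv ℝ SS (u, p, θ)) (u, p, θ) :=
    (h.differentiableAt (by simp)).hasFDerivAt
  have hcurve : HasDerivAt (fun t : ℝ => (u, p, t)) ((0, 0, 1) : ℝ × ℝ × ℝ) θ :=
    (hasDerivAt_const θ u).prodMk ((hasDerivAt_const θ p).prodMk (hasDerivAt_id' θ))
  have h1 : HasDerivAt (fun t => SS (u, p, t)) (fderiv ℝ SS (u, p, θ) (0, 0, 1)) θ :=
    HasFDerivAt.comp_hasDerivAt (f := fun t : ℝ => (u, p, t)) θ hS hcurve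
  have h2 : HasDerivAt (fun t => SS (u, p, t)) (u * cc u p * deriv (HH u) θ) θ :=
    (HH_differentiable u θ).hasDerivAt.const_mul (u * cc u p)
  exact h1.unique h2

lemma SS_dp {u p θ : ℝ} (h : ContDiffAt ℝ (⊤ : ℕ∞) SS (u, p, θ)) :
    fderiv ℝ SS (u, p, θ) (0, 1, 0) = u * deriv (cc u) p * HH u θ := by
  have hS : HasFDerivAt SS (fderiv ℝ SS (u, p, θ)) (u, p, θ) :=
    (h.differentiableAt (by simp)).hasFDerivAt
  have hcurve : HasDerivAt (fun t : ℝ => (u, t, θ)) ((0, 1, 0) : ℝ × ℝ × ℝ) p :=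
    (hasDerivAt_const p u).prodMk ((hasDerivAt_id' p).prodMk (hasDerivAt_const p θ))
  have h1 : HasDerivAt (fun t => SS (u, t, θ)) (fderiv ℝ SS (u, p, θ) (0, 1, 0)) p :=
    HasFDerivAt.comp_hasDerivAt (f := fun t : ℝ => (u, t, θ)) p hS hcurve
  have h2 : HasDerivAt (fun t => SS (u, t, θ)) (u * deriv (cc u) p * HH u θ) p :=
    ((cc_differentiable u p).hasDerivAt.const_mul u).mul_const (HH u θ)
  exact h1.unique h2

lemma cc_lip {u : ℝ} (hu : -(3 / 4) < u) (h : u < 0) {p p' : ℝ} (hp : p ∈ Icc 0 (aa u))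
    (hp' : p' ∈ Icc 0 (aa u)) :
    |cc u p - cc u p'| ≤ 1 / (8 * Real.sqrt (-u)) * |p - p'| := by
  have hs : 0 < Real.sqrt (-u) := Real.sqrt_pos.2 (by linarith)
  refine (zz_lip h _ _).trans ?_
  have e : p * (aa u - p) - p' * (aa u - p') = (p - p') * (aa u - p - p') := by ring
  have ha : aa u ≤ 5 / 2 := by unfold aa; linarith
  have h2 : |aa u - p - p'| ≤ 5 / 2 := by
    rw [abs_le]; constructor <;> linarith [hp.1, hp.2, hp'.1, hp'.2]
  rw [e, abs_mul]
  calc 1 / (20 * Real.sqrt (-u)) * (|p - p'| * |aa u - p - p'|)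
      ≤ 1 / (20 * Real.sqrt (-u)) * (|p - p'| * (5 / 2)) := by gcongr
    _ = 1 / (8 * Real.sqrt (-u)) * |p - p'| := by field_simp; ring

lemma HH_lip {u : ℝ} (h : u < 0) {θ θ' : ℝ} (hθ' : |θ'| ≤ 4) :
    |HH u θ - HH u θ'| ≤ (1 + 1 / (5 * Real.sqrt (-u))) * |θ - θ'| := by
  have hs : 0 < Real.sqrt (-u) := Real.sqrt_pos.2 (by linarith)
  have e : HH u θ - HH u θ' = (θ - θ') * zz u (1 + Real.cos θ)
      + θ' * (zz u (1 + Real.cos θ) - zz u (1 + Real.cos θ')) := by unfold HH; ring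
  have h1 := zz_abs_le u (1 + Real.cos θ)
  have h2 := zz_lip h (1 + Real.cos θ) (1 + Real.cos θ')
  have h3 : |1 + Real.cos θ - (1 + Real.cos θ')| ≤ |θ - θ'| := by
    have := Real.abs_cos_sub_cos_le θ θ'
    rwa [add_sub_add_left_eq_sub]
  rw [e]
  refine (abs_add_le _ _).trans ?_
  rw [abs_mul, abs_mul]
  calc |θ - θ'| * |zz u (1 + Real.cos θ)|
        + |θ'| * |zz u (1 + Real.cos θ) - zz u (1 + Real.cos θ')|
      ≤ |θ - θ'| * 1 + 4 * (1 / (20 * Real.sqrt (-u)) * |θ - θ'|) := by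
        gcongr
        exact h2.trans (by gcongr)
    _ = (1 + 1 / (5 * Real.sqrt (-u))) * |θ - θ'| := by field_simp; ring

lemma HH_deriv_le {u θ : ℝ} (h : u < 0) (hθ : |θ| < 4) :
    |deriv (HH u) θ| ≤ 1 + 1 / (5 * Real.sqrt (-u)) := by
  have hpos : 0 ≤ 1 + 1 / (5 * Real.sqrt (-u)) := by positivity
  have hl : LipschitzOnWith ⟨_, hpos⟩ (HH u) (Ioo (-4) 4) :=
    LipschitzOnWith.of_dist_le_mul fun x _ y hy => by
      rw [Real.dist_eq, Real.dist_eq]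
      exact HH_lip h (abs_lt.2 hy).le
  exact norm_deriv_le_of_lipschitzOn (isOpen_Ioo.mem_nhds (abs_lt.1 hθ)) hl

lemma cc_deriv_le {u p : ℝ} (hu : -(3 / 4) < u) (h : u < 0) (hp : p ∈ Ioo 0 (aa u)) :
    |deriv (cc u) p| ≤ 1 / (8 * Real.sqrt (-u)) := by
  have hpos : 0 ≤ 1 / (8 * Real.sqrt (-u)) := by positivity
  have hl : LipschitzOnWith ⟨_, hpos⟩ (cc u) (Icc 0 (aa u)) :=
    LipschitzOnWith.of_dist_le_mul fun x hx y hy => by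
      rw [Real.dist_eq, Real.dist_eq]
      exact cc_lip hu h hx hy
  exact norm_deriv_le_of_lipschitzOn (Icc_mem_nhds hp.1 hp.2) hl

/-- The product of the two Lipschitz constants beats the factor `|u|`. -/
lemma const_bound {u : ℝ} (hu : -(3 / 4) < u) (h : u < 0) :
    |u| * (1 / (8 * Real.sqrt (-u)) * (1 + 1 / (5 * Real.sqrt (-u)))) ≤ 1 / 2 := by
  have hs : 0 < Real.sqrt (-u) := Real.sqrt_pos.2 (by linarith)
  have h2 : Real.sqrt (-u) ^ 2 = -u := Real.sq_sqrt (by linarith)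
  have h1 : Real.sqrt (-u) ≤ 1 := by
    rw [Real.sqrt_le_left (by norm_num)]; linarith
  have h3 : |u| = Real.sqrt (-u) ^ 2 := by rw [abs_of_neg h, h2]
  rw [h3]
  have e : Real.sqrt (-u) ^ 2 * (1 / (8 * Real.sqrt (-u)) * (1 + 1 / (5 * Real.sqrt (-u))))
      = (Real.sqrt (-u) + 1 / 5) / 8 := by field_simp
  rw [e]; linarith

/-- `p ↦ ∂S/∂θ` is a contraction. -/
lemma contraction_p {u p p' θ : ℝ} (hu : -(3 / 4) < u)
    (h : u < 0 → p ∈ Icc 0 (aa u) ∧ p' ∈ Icc 0 (aa u)) (hθ : |θ| < 4) :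
    |u * cc u p * deriv (HH u) θ - u * cc u p' * deriv (HH u) θ| ≤ 1 / 2 * |p - p'| := by
  rcases lt_or_ge u 0 with h0 | h0
  · obtain ⟨hp, hp'⟩ := h h0
    have e : u * cc u p * deriv (HH u) θ - u * cc u p' * deriv (HH u) θ
        = u * ((cc u p - cc u p') * deriv (HH u) θ) := by ring
    rw [e, abs_mul, abs_mul]
    calc |u| * (|cc u p - cc u p'| * |deriv (HH u) θ|)
        ≤ |u| * ((1 / (8 * Real.sqrt (-u)) * |p - p'|) * (1 + 1 / (5 * Real.sqrt (-u)))) := by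
          gcongr
          · exact cc_lip hu h0 hp hp'
          · exact HH_deriv_le h0 hθ
      _ = |u| * (1 / (8 * Real.sqrt (-u)) * (1 + 1 / (5 * Real.sqrt (-u)))) * |p - p'| := by ring
      _ ≤ 1 / 2 * |p - p'| := by
          gcongr
          exact const_bound hu h0
  · rw [cc_of_nonneg h0]; simp

/-- `θ ↦ ∂S/∂p` is a contraction. -/
lemma contraction_θ {u p θ θ' : ℝ} (hu : -(3 / 4) < u) (h : u < 0 → p ∈ Ioo 0 (aa u))
    (hθ : |θ'| ≤ 4) :
    |u * deriv (cc u) p * HH u θ - u * deriv (cc u) p * HH u θ'| ≤ 1 / 2 * |θ - θ'| := by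
  rcases lt_or_ge u 0 with h0 | h0
  · have e : u * deriv (cc u) p * HH u θ - u * deriv (cc u) p * HH u θ'
        = u * (deriv (cc u) p * (HH u θ - HH u θ')) := by ring
    rw [e, abs_mul, abs_mul]
    calc |u| * (|deriv (cc u) p| * |HH u θ - HH u θ'|)
        ≤ |u| * (1 / (8 * Real.sqrt (-u)) * ((1 + 1 / (5 * Real.sqrt (-u))) * |θ - θ'|)) := by
          gcongr
          · exact cc_deriv_le hu h0 (h h0)
          · exact HH_lip h0 hθ
      _ = |u| * (1 / (8 * Real.sqrt (-u)) * (1 + 1 / (5 * Real.sqrt (-u)))) * |θ - θ'| := by ring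
      _ ≤ 1 / 2 * |θ - θ'| := by
          gcongr
          exact const_bound hu h0
  · rw [cc_of_nonneg h0]; simp

lemma SS_eventually_zero_p {u p θ : ℝ} (h : u < 0) (hb : p * (aa u - p) < cB * Real.sqrt (-u)) :
    SS =ᶠ[𝓝 (u, p, θ)] fun _ => 0 := by
  have h2 : Continuous aa := aa_contDiff.continuous
  have o1 : IsOpen {x : ℝ × ℝ × ℝ | x.1 < 0} := isOpen_lt (by fun_prop) (by fun_prop)
  have o2 : IsOpen {x : ℝ × ℝ × ℝ | x.2.1 * (aa x.1 - x.2.1) < cB * Real.sqrt (-x.1)} :=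
    isOpen_lt (by fun_prop) (by fun_prop)
  filter_upwards [o1.mem_nhds h, o2.mem_nhds hb] with x h1 h2
  have : cc x.1 x.2.1 = 0 := zz_zero h1 (le_of_lt h2)
  simp [SS, this]

lemma SS_eventually_zero_θ {u p θ : ℝ} (h : u < 0) (hb : 1 + Real.cos θ < cB * Real.sqrt (-u)) :
    SS =ᶠ[𝓝 (u, p, θ)] fun _ => 0 := by
  have o1 : IsOpen {x : ℝ × ℝ × ℝ | x.1 < 0} := isOpen_lt (by fun_prop) (by fun_prop)
  have o2 : IsOpen {x : ℝ × ℝ × ℝ | 1 + Real.cos x.2.2 < cB * Real.sqrt (-x.1)} :=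
    isOpen_lt (by fun_prop) (by fun_prop)
  filter_upwards [o1.mem_nhds h, o2.mem_nhds hb] with x h1 h2
  have : HH x.1 x.2.2 = 0 := by
    have : zz x.1 (1 + Real.cos x.2.2) = 0 := zz_zero h1 (le_of_lt h2)
    simp [HH, this]
  simp [SS, this]

/-! ### The second correspondence -/

/-- The arguments of the generating function. -/
def Rm (t : ℝ × ℝ × ℝ × ℝ) : ℝ × ℝ × ℝ := (t.1, t.2.2.1, t.2.2.2)

/-- `Rm` as a continuous linear map. -/
def RmL : (ℝ × ℝ × ℝ × ℝ) →L[ℝ] ℝ × ℝ × ℝ :=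
  (ContinuousLinearMap.fst ℝ ℝ (ℝ × ℝ × ℝ)).prod
    ((ContinuousLinearMap.snd ℝ ℝ (ℝ × ℝ)).comp (ContinuousLinearMap.snd ℝ ℝ (ℝ × ℝ × ℝ)))

/-- Source leg of the second correspondence: the source momentum is `p - S_θ`. -/
def SB (t : ℝ × ℝ × ℝ × ℝ) : ℝ × ℝ × ℝ × ℝ :=
  (t.1, t.2.1, t.2.2.1 - fderiv ℝ SS (Rm t) (0, 0, 1), t.2.2.2)

/-- Target leg of the second correspondence: the target angles are `α - S_u` and `θ - S_p`. -/
def TB (t : ℝ × ℝ × ℝ × ℝ) : ℝ × ℝ × ℝ × ℝ :=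
  (t.1, t.2.1 - fderiv ℝ SS (Rm t) (1, 0, 0), t.2.2.1, t.2.2.2 - fderiv ℝ SS (Rm t) (0, 1, 0))

/-- The parameter domain of the second correspondence. -/
def SigB : Set (ℝ × ℝ × ℝ × ℝ) :=
  {t | -(3 / 4) < t.1 ∧ |t.2.2.2| < π ∧ max 0 t.1 < t.2.2.1 ∧ t.2.2.1 < aa t.1 + max 0 t.1}

lemma isOpen_SigB : IsOpen SigB := by
  have h1 : Continuous aa := aa_contDiff.continuous
  have e1 : IsOpen {t : ℝ × ℝ × ℝ × ℝ | -(3 / 4) < t.1} := isOpen_lt (by fun_prop) (by fun_prop)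
  have e2 : IsOpen {t : ℝ × ℝ × ℝ × ℝ | |t.2.2.2| < π} := isOpen_lt (by fun_prop) (by fun_prop)
  have e3 : IsOpen {t : ℝ × ℝ × ℝ × ℝ | max 0 t.1 < t.2.2.1} :=
    isOpen_lt (by fun_prop) (by fun_prop)
  have e4 : IsOpen {t : ℝ × ℝ × ℝ × ℝ | t.2.2.1 < aa t.1 + max 0 t.1} :=
    isOpen_lt (by fun_prop) (by fun_prop)
  exact e1.inter (e2.inter (e3.inter e4))

lemma SigB_pos {t : ℝ × ℝ × ℝ × ℝ} (ht : t ∈ SigB) : 0 < t.2.2.1 :=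
  (le_max_left _ _).trans_lt ht.2.2.1

lemma SigB_neg {t : ℝ × ℝ × ℝ × ℝ} (ht : t ∈ SigB) (h : t.1 < 0) : t.2.2.1 ∈ Ioo 0 (aa t.1) := by
  have h2 := ht.2.2.2
  rw [max_eq_left h.le, add_zero] at h2
  exact ⟨SigB_pos ht, h2⟩

lemma SigB_lt_four {t : ℝ × ℝ × ℝ × ℝ} (ht : t ∈ SigB) : |t.2.2.2| < 4 :=
  ht.2.1.trans Real.pi_lt_four

lemma SS_contDiffAt_Rm {t : ℝ × ℝ × ℝ × ℝ} (ht : t ∈ SigB) :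
    ContDiffAt ℝ (⊤ : ℕ∞) SS (Rm t) := by
  apply SS_contDiffAt
  by_cases h : t.1 = 0
  · right
    have h2 := ht.2.2.2
    have h3 : max 0 t.1 = 0 := by rw [h, max_self]
    rw [h3, add_zero] at h2
    exact ⟨SigB_pos ht, h2, ht.2.1⟩
  · exact Or.inl h

lemma SB_eq {t : ℝ × ℝ × ℝ × ℝ} (ht : t ∈ SigB) : SB t = (t.1, t.2.1,
    t.2.2.1 - t.1 * cc t.1 t.2.2.1 * deriv (HH t.1) t.2.2.2, t.2.2.2) := by
  unfold SB
  rw [show fderiv ℝ SS (Rm t) (0, 0, 1) = _ from SS_dθ (SS_contDiffAt_Rm ht)]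

lemma TB_eq {t : ℝ × ℝ × ℝ × ℝ} (ht : t ∈ SigB) : TB t = (t.1,
    t.2.1 - fderiv ℝ SS (Rm t) (1, 0, 0), t.2.2.1,
    t.2.2.2 - t.1 * deriv (cc t.1) t.2.2.1 * HH t.1 t.2.2.2) := by
  unfold TB
  rw [show fderiv ℝ SS (Rm t) (0, 1, 0) = _ from SS_dp (SS_contDiffAt_Rm ht)]

lemma partial_hasFDerivAt {t : ℝ × ℝ × ℝ × ℝ} (ht : t ∈ SigB) (e : ℝ × ℝ × ℝ) :
    ContDiffAt ℝ (⊤ : ℕ∞) (fun t => fderiv ℝ SS (Rm t) e) t ∧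
    HasFDerivAt (fun t => fderiv ℝ SS (Rm t) e)
      ((fderiv ℝ (fun y => fderiv ℝ SS y e) (Rm t)).comp RmL) t := by
  have hS := contDiffAt_partial (SS_contDiffAt_Rm ht) e
  have hR : HasFDerivAt Rm RmL t := RmL.hasFDerivAt
  have hRc : ContDiffAt ℝ (⊤ : ℕ∞) Rm t := RmL.contDiff.contDiffAt
  exact ⟨hS.comp t hRc, (hS.differentiableAt (by simp)).hasFDerivAt.comp t hR⟩

/-- A coordinate projection on quadruples. -/
def pr1 : (ℝ × ℝ × ℝ × ℝ) →L[ℝ] ℝ := ContinuousLinearMap.fst ℝ ℝ (ℝ × ℝ × ℝ)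

/-- A coordinate projection on quadruples. -/
def pr2 : (ℝ × ℝ × ℝ × ℝ) →L[ℝ] ℝ :=
  (ContinuousLinearMap.fst ℝ ℝ (ℝ × ℝ)).comp (ContinuousLinearMap.snd ℝ ℝ (ℝ × ℝ × ℝ))

/-- A coordinate projection on quadruples. -/
def pr3 : (ℝ × ℝ × ℝ × ℝ) →L[ℝ] ℝ := (ContinuousLinearMap.fst ℝ ℝ ℝ).comp
    ((ContinuousLinearMap.snd ℝ ℝ (ℝ × ℝ)).comp (ContinuousLinearMap.snd ℝ ℝ (ℝ × ℝ × ℝ)))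

/-- A coordinate projection on quadruples. -/
def pr4 : (ℝ × ℝ × ℝ × ℝ) →L[ℝ] ℝ := (ContinuousLinearMap.snd ℝ ℝ ℝ).comp
    ((ContinuousLinearMap.snd ℝ ℝ (ℝ × ℝ)).comp (ContinuousLinearMap.snd ℝ ℝ (ℝ × ℝ × ℝ)))

lemma SB_deriv {t : ℝ × ℝ × ℝ × ℝ} (ht : t ∈ SigB) :
    ContDiffAt ℝ (⊤ : ℕ∞) SB t ∧ ∀ x, fderiv ℝ SB t x = (x.1, x.2.1,
      x.2.2.1 - fderiv ℝ (fderiv ℝ SS) (Rm t) (Rm x) (0, 0, 1), x.2.2.2) := by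
  obtain ⟨hc, hd⟩ := partial_hasFDerivAt ht (0, 0, 1)
  constructor
  · exact pr1.contDiff.contDiffAt.prodMk (pr2.contDiff.contDiffAt.prodMk
      ((pr3.contDiff.contDiffAt.sub hc).prodMk pr4.contDiff.contDiffAt))
  · intro x
    have h : HasFDerivAt SB _ t := pr1.hasFDerivAt.prodMk (pr2.hasFDerivAt.prodMk
      ((pr3.hasFDerivAt.sub hd).prodMk pr4.hasFDerivAt))
    rw [h.fderiv]
    have e := fderiv_partial (SS_contDiffAt_Rm ht) (0, 0, 1) (RmL x)
    rw [show Rm x = RmL x from rfl, ← e]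
    rfl

lemma TB_deriv {t : ℝ × ℝ × ℝ × ℝ} (ht : t ∈ SigB) :
    ContDiffAt ℝ (⊤ : ℕ∞) TB t ∧ ∀ x, fderiv ℝ TB t x = (x.1,
      x.2.1 - fderiv ℝ (fderiv ℝ SS) (Rm t) (Rm x) (1, 0, 0), x.2.2.1,
      x.2.2.2 - fderiv ℝ (fderiv ℝ SS) (Rm t) (Rm x) (0, 1, 0)) := by
  obtain ⟨hc, hd⟩ := partial_hasFDerivAt ht (1, 0, 0)
  obtain ⟨hc', hd'⟩ := partial_hasFDerivAt ht (0, 1, 0)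
  constructor
  · exact pr1.contDiff.contDiffAt.prodMk ((pr2.contDiff.contDiffAt.sub hc).prodMk
      (pr3.contDiff.contDiffAt.prodMk (pr4.contDiff.contDiffAt.sub hc')))
  · intro x
    have h : HasFDerivAt TB _ t := pr1.hasFDerivAt.prodMk ((pr2.hasFDerivAt.sub hd).prodMk
      (pr3.hasFDerivAt.prodMk (pr4.hasFDerivAt.sub hd')))
    rw [h.fderiv]
    have e := fderiv_partial (SS_contDiffAt_Rm ht) (1, 0, 0) (RmL x)
    have e' := fderiv_partial (SS_contDiffAt_Rm ht) (0, 1, 0) (RmL x)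
    rw [show Rm x = RmL x from rfl, ← e, ← e']
    rfl

/-- Both legs induce the same form, by symmetry of the Hessian of the generating function. -/
lemma SB_TB_form {t : ℝ × ℝ × ℝ × ℝ} (ht : t ∈ SigB) (x y : ℝ × ℝ × ℝ × ℝ) :
    Om4 (fderiv ℝ TB t x) (fderiv ℝ TB t y) = Om4 (fderiv ℝ SB t x) (fderiv ℝ SB t y) := by
  rw [(SB_deriv ht).2, (SB_deriv ht).2, (TB_deriv ht).2, (TB_deriv ht).2]
  have hH : ∀ X Y : ℝ × ℝ × ℝ, X.1 * fderiv ℝ (fderiv ℝ SS) (Rm t) Y (1, 0, 0)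
      + X.2.1 * fderiv ℝ (fderiv ℝ SS) (Rm t) Y (0, 1, 0)
      + X.2.2 * fderiv ℝ (fderiv ℝ SS) (Rm t) Y (0, 0, 1)
      = fderiv ℝ (fderiv ℝ SS) (Rm t) Y X := by
    intro X Y
    have : X = X.1 • ((1 : ℝ), (0 : ℝ), (0 : ℝ)) + X.2.1 • ((0 : ℝ), (1 : ℝ), (0 : ℝ))
        + X.2.2 • ((0 : ℝ), (0 : ℝ), (1 : ℝ)) := by ext <;> simp
    conv_rhs => rw [this]
    rw [map_add, map_add, map_smul, map_smul, map_smul]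
    simp
  have hsym := hessian_symm (SS_contDiffAt_Rm ht) (Rm x) (Rm y)
  rw [← hH (Rm x) (Rm y), ← hH (Rm y) (Rm x)] at hsym
  simp only [Om4]
  simp only [Rm] at hsym ⊢
  linear_combination (1 / 2) * hsym

lemma SB_injective_fderiv {t : ℝ × ℝ × ℝ × ℝ} (ht : t ∈ SigB) :
    Function.Injective (fderiv ℝ SB t) := by
  have hS := SS_contDiffAt_Rm ht
  set K := fderiv ℝ (fderiv ℝ SS) (Rm t) (0, 1, 0) (0, 0, 1) with hK
  have hK1 : |K| ≤ 1 / 2 := by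
    have h1 : HasFDerivAt (fun y => fderiv ℝ SS y (0, 0, 1)) _ (Rm t) :=
      ((contDiffAt_partial hS (0, 0, 1)).differentiableAt (by simp)).hasFDerivAt
    have hcurve : HasDerivAt (fun p : ℝ => (t.1, p, t.2.2.2)) ((0, 1, 0) : ℝ × ℝ × ℝ) t.2.2.1 :=
      (hasDerivAt_const _ t.1).prodMk ((hasDerivAt_id' _).prodMk (hasDerivAt_const _ t.2.2.2))
    have h2 : HasDerivAt (fun p : ℝ => fderiv ℝ SS (t.1, p, t.2.2.2) (0, 0, 1)) K t.2.2.1 := by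
      have := HasFDerivAt.comp_hasDerivAt (f := fun p : ℝ => (t.1, p, t.2.2.2)) t.2.2.1 h1 hcurve
      rwa [fderiv_partial hS] at this
    have hc : Continuous fun p : ℝ => (t.1, t.2.1, p, t.2.2.2) := by fun_prop
    have hU : {p : ℝ | (t.1, t.2.1, p, t.2.2.2) ∈ SigB} ∈ 𝓝 t.2.2.1 :=
      (isOpen_SigB.preimage hc).mem_nhds ht
    have hl : LipschitzOnWith (1 / 2) (fun p : ℝ => fderiv ℝ SS (t.1, p, t.2.2.2) (0, 0, 1))
        {p : ℝ | (t.1, t.2.1, p, t.2.2.2) ∈ SigB} := by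
      refine LipschitzOnWith.of_dist_le_mul fun p hp p' hp' => ?_
      have e : fderiv ℝ SS (t.1, p, t.2.2.2) (0, 0, 1) = _ := SS_dθ (SS_contDiffAt_Rm hp)
      have e' : fderiv ℝ SS (t.1, p', t.2.2.2) (0, 0, 1) = _ := SS_dθ (SS_contDiffAt_Rm hp')
      rw [Real.dist_eq, Real.dist_eq, e, e']
      have := contraction_p (p := p) (p' := p') ht.1
        (fun h => ⟨Ioo_subset_Icc_self (SigB_neg hp h), Ioo_subset_Icc_self (SigB_neg hp' h)⟩)
        (SigB_lt_four ht)
      simpa using this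
    have := norm_deriv_le_of_lipschitzOn hU hl
    rw [h2.deriv] at this
    simpa using this
  rw [injective_iff_map_eq_zero]
  intro x hx
  rw [(SB_deriv ht).2] at hx
  have h1 : x.1 = 0 := congrArg Prod.fst hx
  have h2 : x.2.1 = 0 := congrArg (fun y => y.2.1) hx
  have h3 : x.2.2.1 - fderiv ℝ (fderiv ℝ SS) (Rm t) (Rm x) (0, 0, 1) = 0 :=
    congrArg (fun y => y.2.2.1) hx
  have h4 : x.2.2.2 = 0 := congrArg (fun y => y.2.2.2) hx
  have h5 : Rm x = x.2.2.1 • ((0 : ℝ), (1 : ℝ), (0 : ℝ)) := by simp [Rm, h1, h4]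
  rw [h5, map_smul] at h3
  have h6 : x.2.2.1 * (1 - K) = 0 := by
    have : x.2.2.1 - x.2.2.1 * K = 0 := h3
    linear_combination this
  have h7 : x.2.2.1 = 0 := (mul_eq_zero.1 h6).resolve_right (by linarith [(abs_le.1 hK1).2])
  exact Prod.ext h1 (Prod.ext h2 (Prod.ext h7 h4))

lemma cc_zero_end {u : ℝ} (h : u < 0) : cc u 0 = 0 ∧ cc u (aa u) = 0 := by
  constructor
  · apply zz_zero h
    rw [zero_mul]; exact (cB_sqrt_pos h).le
  · apply zz_zero h
    rw [sub_self, mul_zero]; exact (cB_sqrt_pos h).le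

lemma HH_zero_end {u : ℝ} (h : u < 0) : HH u π = 0 ∧ HH u (-π) = 0 := by
  have : zz u 0 = 0 := zz_zero h (cB_sqrt_pos h).le
  constructor <;> simp [HH, this]

lemma aa_pos {u : ℝ} (h : u < 0) : 0 < aa u := by unfold aa; linarith

lemma SB_mem {t : ℝ × ℝ × ℝ × ℝ} (ht : t ∈ SigB) : (SB t).2.2.1 ∈ Ioo 0 (aa t.1) := by
  rw [SB_eq ht]
  rcases lt_or_ge t.1 0 with h | h
  · have hp := SigB_neg ht h
    have ha := aa_pos h
    have h1 := contraction_p (p := t.2.2.1) (p' := 0) ht.1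
      (fun _ => ⟨Ioo_subset_Icc_self hp, ⟨le_rfl, ha.le⟩⟩) (SigB_lt_four ht)
    have h2 := contraction_p (p := t.2.2.1) (p' := aa t.1) ht.1
      (fun _ => ⟨Ioo_subset_Icc_self hp, ⟨ha.le, le_rfl⟩⟩) (SigB_lt_four ht)
    rw [(cc_zero_end h).1, mul_zero, zero_mul, sub_zero, sub_zero, abs_of_pos hp.1] at h1
    rw [(cc_zero_end h).2, mul_zero, zero_mul, sub_zero, abs_of_neg (sub_neg.2 hp.2)] at h2
    have h1 := abs_le.1 h1
    have h2 := abs_le.1 h2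
    exact ⟨by show (0 : ℝ) < _ - _; linarith [hp.1], by show _ - _ < _; linarith [hp.2]⟩
  · have h3 := ht.2.2
    rw [max_eq_right h] at h3
    rw [cc_of_nonneg h, HH_of_nonneg h]
    simp only [deriv_id'', mul_one]
    exact ⟨by linarith [h3.1], by linarith [h3.2]⟩

lemma SB_injOn {t t' : ℝ × ℝ × ℝ × ℝ} (ht : t ∈ SigB) (ht' : t' ∈ SigB) (h : SB t = SB t') :
    t = t' := by
  obtain ⟨u, α, p, θ⟩ := t
  obtain ⟨u', α', p', θ'⟩ := t'
  rw [SB_eq ht, SB_eq ht'] at h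
  simp only [Prod.mk.injEq] at h
  obtain ⟨rfl, rfl, h3, rfl⟩ := h
  have := contraction_p (p := p) (p' := p') ht.1
    (fun h => ⟨Ioo_subset_Icc_self (SigB_neg ht h), Ioo_subset_Icc_self (SigB_neg ht' h)⟩)
    (SigB_lt_four ht)
  simp only at this
  have e : u * cc u p * deriv (HH u) θ - u * cc u p' * deriv (HH u) θ = p - p' := by linarith
  rw [e] at this
  have h0 : |p - p'| = 0 := by linarith [abs_nonneg (p - p')]
  have h1 : p = p' := sub_eq_zero.1 (abs_eq_zero.1 h0)
  rw [h1]

lemma SB_surj {u : ℝ} (α : ℝ) {P θ : ℝ} (hu : -(3 / 4) < u) (hP : P ∈ Ioo 0 (aa u))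
    (hθ : |θ| < π) : ∃ p, (u, α, p, θ) ∈ SigB ∧ SB (u, α, p, θ) = (u, α, P, θ) := by
  rcases lt_or_ge u 0 with h | h
  · have ha := aa_pos h
    set g : ℝ → ℝ := fun p => p - u * cc u p * deriv (HH u) θ with hg
    have hgc : Continuous g := by
      have := (cc_differentiable u).continuous
      fun_prop
    have h0 : g 0 = 0 := by simp [hg, (cc_zero_end h).1]
    have h1 : g (aa u) = aa u := by simp [hg, (cc_zero_end h).2]
    have hmem : P ∈ Icc (g 0) (g (aa u)) := by rw [h0, h1]; exact Ioo_subset_Icc_self hP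
    obtain ⟨p, hp, hpP⟩ := intermediate_value_Icc ha.le hgc.continuousOn hmem
    have hp0 : 0 < p := by
      refine lt_of_le_of_ne hp.1 fun e => ?_
      rw [← e, h0] at hpP; linarith [hP.1]
    have hpa : p < aa u := by
      refine lt_of_le_of_ne hp.2 fun e => ?_
      rw [e, h1] at hpP; linarith [hP.2]
    have hmem : (u, α, p, θ) ∈ SigB := by
      refine ⟨hu, hθ, ?_, ?_⟩
      · show max 0 u < p
        rw [max_eq_left h.le]; exact hp0
      · show p < aa u + max 0 u
        rw [max_eq_left h.le]; linarith
    refine ⟨p, hmem, ?_⟩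
    rw [SB_eq hmem, ← hpP]
  · have hmem : (u, α, P + u, θ) ∈ SigB := by
      refine ⟨hu, hθ, ?_, ?_⟩
      · show max 0 u < P + u
        rw [max_eq_right h]; linarith [hP.1]
      · show P + u < aa u + max 0 u
        rw [max_eq_right h]; linarith [hP.2]
    refine ⟨P + u, hmem, ?_⟩
    rw [SB_eq hmem]
    simp [cc_of_nonneg h, HH_of_nonneg h]

lemma TB_mem {t : ℝ × ℝ × ℝ × ℝ} (ht : t ∈ SigB) : |(TB t).2.2.2| < π := by
  rw [TB_eq ht]
  rcases lt_or_ge t.1 0 with h | h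
  · have h1 := contraction_θ (θ := t.2.2.2) (θ' := π) ht.1 (SigB_neg ht)
      (by rw [abs_of_pos Real.pi_pos]; exact Real.pi_lt_four.le)
    have h2 := contraction_θ (θ := t.2.2.2) (θ' := -π) ht.1 (SigB_neg ht)
      (by rw [abs_neg, abs_of_pos Real.pi_pos]; exact Real.pi_lt_four.le)
    have h3 := abs_lt.1 ht.2.1
    rw [(HH_zero_end h).1, mul_zero, sub_zero, abs_of_neg (sub_neg.2 h3.2)] at h1
    rw [(HH_zero_end h).2, mul_zero, sub_zero, sub_neg_eq_add,
      abs_of_pos (show 0 < t.2.2.2 + π by linarith [h3.1])] at h2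
    have h1 := abs_le.1 h1
    have h2 := abs_le.1 h2
    rw [abs_lt]
    constructor
    · show _ < _ - _; linarith
    · show _ - _ < _; linarith
  · rw [cc_of_nonneg h]
    simpa using ht.2.1

lemma TB_pos {t : ℝ × ℝ × ℝ × ℝ} (ht : t ∈ SigB) : 0 < (TB t).2.2.1 :=
  (SigB_pos ht : 0 < t.2.2.1)

lemma TB_injOn {t t' : ℝ × ℝ × ℝ × ℝ} (ht : t ∈ SigB) (ht' : t' ∈ SigB) (h : TB t = TB t') :
    t = t' := by
  obtain ⟨u, α, p, θ⟩ := t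
  obtain ⟨u', α', p', θ'⟩ := t'
  rw [TB_eq ht, TB_eq ht'] at h
  simp only [Prod.mk.injEq] at h
  obtain ⟨rfl, h2, rfl, h4⟩ := h
  have := contraction_θ (θ := θ) (θ' := θ') ht.1 (SigB_neg ht) (SigB_lt_four ht').le
  simp only at this
  have e : u * deriv (cc u) p * HH u θ - u * deriv (cc u) p * HH u θ' = θ - θ' := by linarith
  rw [e] at this
  have h0 : |θ - θ'| = 0 := by linarith [abs_nonneg (θ - θ')]
  have h1 : θ = θ' := sub_eq_zero.1 (abs_eq_zero.1 h0)
  subst h1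
  have h5 : α = α' := by
    have : Rm (u, α, p, θ) = Rm (u, α', p, θ) := rfl
    rw [this] at h2
    linarith
  rw [h5]

lemma Pol_normSq {t : ℝ × ℝ × ℝ × ℝ} (ht : 0 ≤ t.2.2.1) :
    Complex.normSq (Pol t).2.2 = t.2.2.1 := by
  rw [Complex.normSq_eq_norm_sq]
  show ‖(-(Real.sqrt t.2.2.1 : ℂ)) * Complex.exp ((t.2.2.2 : ℝ) * Complex.I)‖ ^ 2 = _
  rw [norm_mul_exp, norm_neg, Complex.norm_real, Real.norm_eq_abs, sq_abs, Real.sq_sqrt ht]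

lemma Pol_arg {t : ℝ × ℝ × ℝ × ℝ} (ht : 0 < t.2.2.1) (hθ : |t.2.2.2| < π) :
    Complex.arg (-(Pol t).2.2) = t.2.2.2 :=
  arg_neg_polar (Real.sqrt_pos.2 ht) ⟨(abs_lt.1 hθ).1, (abs_lt.1 hθ).2.le⟩

lemma Pol_slit {t : ℝ × ℝ × ℝ × ℝ} (ht : 0 < t.2.2.1) (hθ : |t.2.2.2| < π) :
    -(Pol t).2.2 ∈ Complex.slitPlane := by
  rw [slit_iff]
  constructor
  · rw [← Complex.normSq_pos, Pol_normSq ht.le]; exact ht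
  · rw [Pol_arg ht hθ]; exact ((abs_lt.1 hθ).2).ne

lemma Pol_injOn {t t' : ℝ × ℝ × ℝ × ℝ} (ht : 0 < t.2.2.1) (hθ : |t.2.2.2| < π)
    (ht' : 0 < t'.2.2.1) (hθ' : |t'.2.2.2| < π) (h : Pol t = Pol t') : t = t' := by
  have h1 : t.1 = t'.1 := congrArg (fun y => y.1) h
  have h2 : t.2.1 = t'.2.1 := congrArg (fun y => y.2.1) h
  have h3 : t.2.2.1 = t'.2.2.1 := by rw [← Pol_normSq ht.le, h, Pol_normSq ht'.le]
  have h4 : t.2.2.2 = t'.2.2.2 := by rw [← Pol_arg ht hθ, h, Pol_arg ht' hθ']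
  exact Prod.ext h1 (Prod.ext h2 (Prod.ext h3 h4))

lemma Pol_of_slit {y : ℝ × ℝ × ℂ} :
    Pol (y.1, y.2.1, Complex.normSq y.2.2, Complex.arg (-y.2.2)) = y := by
  refine Prod.ext rfl (Prod.ext rfl ?_)
  show (-(Real.sqrt (Complex.normSq y.2.2) : ℂ))
    * Complex.exp ((Complex.arg (-y.2.2) : ℝ) * Complex.I) = y.2.2
  conv_rhs => rw [neg_polar y.2.2]
  rw [Complex.normSq_eq_norm_sq, Real.sqrt_sq (norm_nonneg _)]

/-! ### The map defined by the second correspondence -/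

open Classical in
/-- The map `Pol ∘ SB ↦ Pol ∘ TB`, extended by the identity. -/
def BB (y : ℝ × ℝ × ℂ) : ℝ × ℝ × ℂ :=
  if h : ∃ t ∈ SigB, Pol (SB t) = y then Pol (TB h.choose) else y

lemma BB_apply {t : ℝ × ℝ × ℝ × ℝ} (ht : t ∈ SigB) : BB (Pol (SB t)) = Pol (TB t) := by
  have h : ∃ t' ∈ SigB, Pol (SB t') = Pol (SB t) := ⟨t, ht, rfl⟩
  have e : h.choose = t := by
    have h1 := h.choose_spec.1
    refine SB_injOn h1 ht ?_
    exact Pol_injOn (SB_mem h1).1 h1.2.1 (SB_mem ht).1 ht.2.1 h.choose_spec.2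
  rw [BB, dif_pos h, e]

lemma BB_cases {y : ℝ × ℝ × ℂ} (hy : y ∈ SigA) :
    (∃ t ∈ SigB, Pol (SB t) = y ∧ BB y = Pol (TB t)) ∨
    (-y.2.2 ∉ Complex.slitPlane ∧ BB y = y ∧ y.1 < 0) := by
  by_cases h : -y.2.2 ∈ Complex.slitPlane
  · left
    obtain ⟨h1, h2⟩ := slit_iff.1 h
    have hθ : |Complex.arg (-y.2.2)| < π := by
      rw [abs_lt]
      exact ⟨Complex.neg_pi_lt_arg _, lt_of_le_of_ne (Complex.arg_le_pi _) h2⟩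
    obtain ⟨p, hp, hp'⟩ := SB_surj y.2.1 hy.1 ⟨Complex.normSq_pos.2 h1, hy.2.1⟩ hθ
    have e : Pol (SB (y.1, y.2.1, p, Complex.arg (-y.2.2))) = y := by rw [hp', Pol_of_slit]
    exact ⟨_, hp, e, by rw [← BB_apply hp, e]⟩
  · right
    refine ⟨h, ?_, hy.2.2.resolve_right h⟩
    rw [BB, dif_neg]
    rintro ⟨t, ht, rfl⟩
    exact h (Pol_slit (SB_mem ht).1 ht.2.1)

/-- Where the generating function is locally zero, the map is the identity. -/
lemma BB_fix {y : ℝ × ℝ × ℂ} (hu : y.1 < 0)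
    (h : Complex.normSq y.2.2 * (aa y.1 - Complex.normSq y.2.2) < cB * Real.sqrt (-y.1) ∨
      ‖y.2.2‖ - y.2.2.re < ‖y.2.2‖ * (cB * Real.sqrt (-y.1))) : BB y = y := by
  by_cases hex : ∃ t ∈ SigB, Pol (SB t) = y
  · obtain ⟨t, ht, rfl⟩ := hex
    set t0 := SB t with ht0
    have hP := SB_mem ht
    rw [← ht0] at hP
    have hu0 : t0.1 < 0 := hu
    have hθ : |t0.2.2.2| < π := ht.2.1
    have hmem : t0 ∈ SigB := by
      refine ⟨ht.1, hθ, ?_, ?_⟩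
      · rw [max_eq_left hu0.le]; exact hP.1
      · rw [max_eq_left hu0.le, add_zero]; exact hP.2
    have hz : SS =ᶠ[𝓝 (Rm t0)] fun _ => 0 := by
      rw [Pol_normSq hP.1.le] at h
      rcases h with h | h
      · exact SS_eventually_zero_p hu0 h
      · refine SS_eventually_zero_θ hu0 ?_
        have hs : 0 < Real.sqrt t0.2.2.1 := Real.sqrt_pos.2 hP.1
        have e1 : ‖(Pol t0).2.2‖ = Real.sqrt t0.2.2.1 := by
          rw [← Pol_normSq hP.1.le, Complex.normSq_eq_norm_sq, Real.sqrt_sq (norm_nonneg _)]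
        have e2 : (Pol t0).2.2.re = -(Real.sqrt t0.2.2.1 * Real.cos t0.2.2.2) := by
          simp [Pol, Complex.exp_ofReal_mul_I_re]
        rw [e1, e2] at h
        have : Real.sqrt t0.2.2.1 * (1 + Real.cos t0.2.2.2)
          < Real.sqrt t0.2.2.1 * (cB * Real.sqrt (-t0.1)) := by
          have h' : Real.sqrt t0.2.2.1 - -(Real.sqrt t0.2.2.1 * Real.cos t0.2.2.2)
            < Real.sqrt t0.2.2.1 * (cB * Real.sqrt (-t0.1)) := h
          linarith
        exact lt_of_mul_lt_mul_left this hs.le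
    have hd : fderiv ℝ SS (Rm t0) = 0 := by
      rw [hz.fderiv_eq]; simp
    have eS : SB t0 = t0 := by simp [SB, hd]
    have eT : TB t0 = t0 := by simp [TB, hd]
    have := BB_apply hmem
    rw [eS, eT] at this
    exact this
  · rw [BB, dif_neg hex]

lemma BB_sympAt {y : ℝ × ℝ × ℂ} (hy : y ∈ SigA) : SympAt Om Om BB y := by
  rcases BB_cases hy with ⟨t, ht, rfl, -⟩ | ⟨h1, -, hu⟩
  · have hPS := pol_sympAt (t := SB t) (SB_mem ht).1
    have hPT := pol_sympAt (t := TB t) (TB_pos ht)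
    have dS : fderiv ℝ (fun t => Pol (SB t)) t = (fderiv ℝ Pol (SB t)).comp (fderiv ℝ SB t) :=
      fderiv_comp t (hPS.1.differentiableAt (by simp)) ((SB_deriv ht).1.differentiableAt (by simp))
    have dT : fderiv ℝ (fun t => Pol (TB t)) t = (fderiv ℝ Pol (TB t)).comp (fderiv ℝ TB t) :=
      fderiv_comp t (hPT.1.differentiableAt (by simp)) ((TB_deriv ht).1.differentiableAt (by simp))
    refine sympAt_of_correspondence (S := fun t => Pol (SB t)) (T := fun t => Pol (TB t))
      (finrank_E4.trans finrank_G.symm) (hPS.1.comp t (SB_deriv ht).1)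
      (hPT.1.comp t (TB_deriv ht).1) ?_ ?_ ?_
    · rw [dS]
      exact (hPS.injective Om_zero Om4_nondeg).comp (SB_injective_fderiv ht)
    · filter_upwards [isOpen_SigB.mem_nhds ht] with t' ht'
      exact BB_apply ht'
    · intro v w
      rw [dS, dT]
      simp only [ContinuousLinearMap.comp_apply]
      rw [hPS.2, hPT.2, SB_TB_form ht]
  · refine (sympAt_id Om y).congr ?_
    have c1 : Continuous aa := aa_contDiff.continuous
    have c2 : Continuous Complex.normSq := Complex.continuous_normSq
    have c3 : Continuous Complex.re := Complex.continuous_re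
    have o1 : IsOpen {y : ℝ × ℝ × ℂ | y.1 < 0} := isOpen_lt (by fun_prop) (by fun_prop)
    have o2 : IsOpen {y : ℝ × ℝ × ℂ |
        Complex.normSq y.2.2 * (aa y.1 - Complex.normSq y.2.2) < cB * Real.sqrt (-y.1)} :=
      isOpen_lt (by fun_prop) (by fun_prop)
    have o3 : IsOpen {y : ℝ × ℝ × ℂ |
        ‖y.2.2‖ - y.2.2.re < ‖y.2.2‖ * (cB * Real.sqrt (-y.1))} :=
      isOpen_lt (by fun_prop) (by fun_prop)
    have hmem : y ∈ {y : ℝ × ℝ × ℂ | Complex.normSq y.2.2 * (aa y.1 - Complex.normSq y.2.2)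
        < cB * Real.sqrt (-y.1)} ∪ {y : ℝ × ℝ × ℂ |
        ‖y.2.2‖ - y.2.2.re < ‖y.2.2‖ * (cB * Real.sqrt (-y.1))} := by
      rw [slit_iff, not_and_or, not_not, not_not] at h1
      by_cases h0 : y.2.2 = 0
      · left
        simp only [mem_ofPred_eq, h0, map_zero, zero_mul]
        exact cB_sqrt_pos hu
      · right
        have h2 := h1.resolve_left h0
        have h3 := Complex.arg_eq_pi_iff.1 h2
        simp only [Complex.neg_re, Complex.neg_im, neg_eq_zero] at h3
        have h4 : ‖y.2.2‖ = y.2.2.re := by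
          have : y.2.2 = ((y.2.2.re : ℝ) : ℂ) := Complex.ext rfl (by simp [h3.2])
          rw [this, Complex.norm_real, Real.norm_eq_abs, abs_of_pos (by linarith [h3.1]),
            Complex.ofReal_re]
        simp only [mem_ofPred_eq]
        rw [← h4, sub_self]
        exact mul_pos (norm_pos_iff.2 h0) (cB_sqrt_pos hu)
    filter_upwards [o1.mem_nhds hu, (o2.union o3).mem_nhds hmem] with x hx hx'
    exact BB_fix hx hx'

lemma BB_injOn {y y' : ℝ × ℝ × ℂ} (hy : y ∈ SigA) (hy' : y' ∈ SigA) (h : BB y = BB y') :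
    y = y' := by
  rcases BB_cases hy with ⟨t, ht, e, eB⟩ | ⟨h1, eB, -⟩ <;>
    rcases BB_cases hy' with ⟨t', ht', e', eB'⟩ | ⟨h1', eB', -⟩ <;> rw [eB, eB'] at h
  · have := TB_injOn ht ht' (Pol_injOn (TB_pos ht) (TB_mem ht) (TB_pos ht') (TB_mem ht') h)
    rw [← e, ← e', this]
  · rw [← h] at h1'
    exact absurd (Pol_slit (TB_pos ht) (TB_mem ht)) h1'
  · rw [h] at h1
    exact absurd (Pol_slit (TB_pos ht') (TB_mem ht')) h1
  · exact h

lemma BB_fst {y : ℝ × ℝ × ℂ} (hy : y ∈ SigA) : (BB y).1 = y.1 := by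
  rcases BB_cases hy with ⟨t, ht, rfl, eB⟩ | ⟨h1, eB, -⟩ <;> rw [eB]
  rfl

lemma BB_normSq_neg {y : ℝ × ℝ × ℂ} (hy : y ∈ SigA) (hu : y.1 < 0) :
    Complex.normSq (BB y).2.2 < aa y.1 := by
  rcases BB_cases hy with ⟨t, ht, rfl, eB⟩ | ⟨h1, eB, -⟩ <;> rw [eB]
  · rw [Pol_normSq (TB_pos ht).le]
    exact (SigB_neg ht hu).2
  · exact hy.2.1

lemma BB_normSq_nonneg {y : ℝ × ℝ × ℂ} (hy : y ∈ SigA) (hu : 0 ≤ y.1) :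
    y.1 < Complex.normSq (BB y).2.2 ∧ Complex.normSq (BB y).2.2 < aa y.1 + y.1 := by
  rcases BB_cases hy with ⟨t, ht, rfl, eB⟩ | ⟨h1, eB, h2⟩
  · rw [eB, Pol_normSq (TB_pos ht).le]
    have h3 := ht.2.2
    have hu' : 0 ≤ t.1 := hu
    rw [max_eq_right hu'] at h3
    exact h3
  · linarith

/-- Translation in the angle `α`. -/
def sh (c : ℝ) (y : ℝ × ℝ × ℂ) : ℝ × ℝ × ℂ := (y.1, y.2.1 + c, y.2.2)

lemma sh_mem {c : ℝ} {y : ℝ × ℝ × ℂ} (hy : y ∈ SigA) : sh c y ∈ SigA := hy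

lemma SA_sh (c : ℝ) (y : ℝ × ℝ × ℂ) : SA (sh c y) = sh c (SA y) := rfl

lemma TA_sh (c : ℝ) (y : ℝ × ℝ × ℂ) : TA (sh c y) = sh c (TA y) := by
  refine Prod.ext rfl (Prod.ext ?_ rfl)
  show y.2.1 + c + _ = y.2.1 + _ + c
  rw [add_right_comm]
  rfl

lemma BB_sh (c : ℝ) {y : ℝ × ℝ × ℂ} (hy : y ∈ SigA) : BB (sh c y) = sh c (BB y) := by
  rcases BB_cases hy with ⟨t, ht, rfl, eB⟩ | ⟨h1, eB, -⟩
  · have ht' : (t.1, t.2.1 + c, t.2.2) ∈ SigB := ht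
    have := BB_apply ht'
    rw [eB]
    have e2 : sh c (Pol (TB t)) = Pol (TB (t.1, t.2.1 + c, t.2.2)) := by
      refine Prod.ext rfl (Prod.ext ?_ rfl)
      show t.2.1 - _ + c = t.2.1 + c - _
      rw [sub_add_eq_add_sub]
      rfl
    rw [e2, ← this]
    rfl
  · rcases BB_cases (sh_mem (c := c) hy) with ⟨t, ht, e, -⟩ | ⟨-, eB', -⟩
    · exfalso
      apply h1
      have e2 : y.2.2 = (Pol (SB t)).2.2 := by rw [e]; rfl
      rw [e2]
      exact Pol_slit (SB_mem ht).1 ht.2.1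
    · rw [eB, eB']

/-! ### The folding map on `ℂ²` -/

/-- The Hamiltonian `|z₁|² + 2|z₂|² - 6`. -/
def uu (z : Fin 2 → ℂ) : ℝ := Complex.normSq (z 0) + 2 * Complex.normSq (z 1) - 6

/-- `|z₂|²`. -/
def pp (z : Fin 2 → ℂ) : ℝ := Complex.normSq (z 1)

/-- The open set moved by the folding map. -/
def WW : Set (Fin 2 → ℂ) := {z | -(3 / 4) < uu z ∧ pp z < aa (uu z)}

lemma uu_continuous : Continuous uu := by
  have c2 : Continuous Complex.normSq := Complex.continuous_normSq
  unfold uu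
  fun_prop

lemma pp_continuous : Continuous pp := by
  have c2 : Continuous Complex.normSq := Complex.continuous_normSq
  unfold pp
  fun_prop

lemma pp_nonneg (z : Fin 2 → ℂ) : 0 ≤ pp z := Complex.normSq_nonneg _

lemma isOpen_WW : IsOpen WW := by
  have h1 := uu_continuous
  have h2 := pp_continuous
  have h3 : Continuous aa := aa_contDiff.continuous
  have e1 : IsOpen {z | -(3 / 4) < uu z} := isOpen_lt (by fun_prop) (by fun_prop)
  have e2 : IsOpen {z | pp z < aa (uu z)} := isOpen_lt (by fun_prop) (by fun_prop)
  exact e1.inter e2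

lemma normSq_mul_exp (z : ℂ) (t : ℝ) :
    Complex.normSq (z * Complex.exp (t * Complex.I)) = Complex.normSq z := by
  rw [Complex.normSq_eq_norm_sq, norm_mul_exp, Complex.normSq_eq_norm_sq]

lemma chart_pp (y : ℝ × ℝ × ℂ) : pp (Chart y) = Complex.normSq y.2.2 := normSq_mul_exp _ _

lemma chart_uu {y : ℝ × ℝ × ℂ} (hy : 0 < 6 + y.1 - 2 * Complex.normSq y.2.2) :
    uu (Chart y) = y.1 := by
  have h0 : Complex.normSq (Chart y 0) = 6 + y.1 - 2 * Complex.normSq y.2.2 := by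
    refine (normSq_mul_exp _ _).trans ?_
    rw [Complex.normSq_ofReal, Real.mul_self_sqrt hy.le]
  have h1 : Complex.normSq (Chart y 1) = Complex.normSq y.2.2 := normSq_mul_exp _ _
  rw [uu, h0, h1]; ring

lemma chart_surj {z : Fin 2 → ℂ} :
    ∃ y, Chart y = z ∧ y.1 = uu z ∧ Complex.normSq y.2.2 = pp z := by
  have e : Complex.normSq (z 1 * Complex.exp ((-(2 * Complex.arg (z 0)) : ℝ) * Complex.I)) = pp z :=
    normSq_mul_exp _ _
  refine ⟨(uu z, Complex.arg (z 0),
    z 1 * Complex.exp ((-(2 * Complex.arg (z 0)) : ℝ) * Complex.I)), ?_, rfl, e⟩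
  funext i
  fin_cases i
  · show (Real.sqrt (6 + uu z - 2 * Complex.normSq (z 1 * Complex.exp
      ((-(2 * Complex.arg (z 0)) : ℝ) * Complex.I))) : ℂ)
      * Complex.exp ((Complex.arg (z 0) : ℝ) * Complex.I) = z 0
    rw [e]
    have : 6 + uu z - 2 * pp z = ‖z 0‖ ^ 2 := by
      rw [← Complex.normSq_eq_norm_sq, uu, pp]; ring
    rw [this, Real.sqrt_sq (norm_nonneg _), Complex.norm_mul_exp_arg_mul_I]
  · show z 1 * Complex.exp ((-(2 * Complex.arg (z 0)) : ℝ) * Complex.I)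
      * Complex.exp ((2 * Complex.arg (z 0) : ℝ) * Complex.I) = z 1
    rw [mul_assoc, ← Complex.exp_add, ← add_mul, ← Complex.ofReal_add]
    simp

lemma chart_sh (k : ℤ) (y : ℝ × ℝ × ℂ) : Chart (sh (k * (2 * π)) y) = Chart y := by
  have e1 : Complex.exp ((y.2.1 + k * (2 * π) : ℝ) * Complex.I)
      = Complex.exp ((y.2.1 : ℝ) * Complex.I) := by
    rw [Complex.exp_eq_exp_iff_exists_int]
    exact ⟨k, by push_cast; ring⟩
  have e2 : Complex.exp ((2 * (y.2.1 + k * (2 * π)) : ℝ) * Complex.I)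
      = Complex.exp ((2 * y.2.1 : ℝ) * Complex.I) := by
    rw [Complex.exp_eq_exp_iff_exists_int]
    exact ⟨2 * k, by push_cast; ring⟩
  unfold Chart sh
  simp only
  rw [e1, e2]

lemma chart_inj {y y' : ℝ × ℝ × ℂ} (hy : 0 < 6 + y.1 - 2 * Complex.normSq y.2.2)
    (hy' : 0 < 6 + y'.1 - 2 * Complex.normSq y'.2.2) (h : Chart y = Chart y') :
    ∃ k : ℤ, y = sh (k * (2 * π)) y' := by
  have h1 : y.1 = y'.1 := by rw [← chart_uu hy, h, chart_uu hy']
  have h2 : Complex.normSq y.2.2 = Complex.normSq y'.2.2 := by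
    rw [← chart_pp, h, chart_pp]
  have h3 := congrFun h 0
  have h4 := congrFun h 1
  simp only [Chart, Matrix.cons_val_zero, Matrix.cons_val_one] at h3 h4
  rw [h1, h2] at h3
  have hne : ((Real.sqrt (6 + y'.1 - 2 * Complex.normSq y'.2.2) : ℝ) : ℂ) ≠ 0 :=
    Complex.ofReal_ne_zero.2 (Real.sqrt_pos.2 hy').ne'
  obtain ⟨k, hk⟩ := Complex.exp_eq_exp_iff_exists_int.1 (mul_left_cancel₀ hne h3)
  have h5 : y.2.1 = y'.2.1 + k * (2 * π) := by
    have := congrArg Complex.im hk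
    simpa using this
  have h6 : Complex.exp ((2 * y.2.1 : ℝ) * Complex.I)
      = Complex.exp ((2 * y'.2.1 : ℝ) * Complex.I) := by
    rw [Complex.exp_eq_exp_iff_exists_int]
    exact ⟨2 * k, by rw [h5]; push_cast; ring⟩
  rw [h6] at h4
  exact ⟨k, Prod.ext h1 (Prod.ext h5 (mul_right_cancel₀ (Complex.exp_ne_zero _) h4))⟩

lemma SA_radicand {s : ℝ × ℝ × ℂ} (hs : s ∈ SigA) :
    0 < 6 + (SA s).1 - 2 * Complex.normSq (SA s).2.2 := by
  have h1 := SA_mem hs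
  have h2 := hs.1
  have h3 : (SA s).1 = s.1 := rfl
  rw [h3]
  unfold aa at h1
  linarith

lemma BB_radicand {y : ℝ × ℝ × ℂ} (hy : y ∈ SigA) :
    0 < 6 + (BB y).1 - 2 * Complex.normSq (BB y).2.2 := by
  have h2 := hy.1
  rw [BB_fst hy]
  rcases lt_or_ge y.1 0 with h | h
  · have h1 := BB_normSq_neg hy h
    unfold aa at h1
    linarith
  · have h1 := (BB_normSq_nonneg hy h).2
    unfold aa at h1
    linarith

open Classical in
/-- The folding map: the composition of the maps of the two correspondences, read in the chart, and
extended by the identity. -/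
def Fold (z : Fin 2 → ℂ) : Fin 2 → ℂ :=
  if h : ∃ s ∈ SigA, Chart (SA s) = z then Chart (BB (TA h.choose)) else z

/-- The legs of the correspondence are determined up to the period of `α`. -/
lemma SA_chart_inj {s s' : ℝ × ℝ × ℂ} (hs : s ∈ SigA) (hs' : s' ∈ SigA)
    (h : Chart (SA s) = Chart (SA s')) : ∃ k : ℤ, s = sh (k * (2 * π)) s' := by
  obtain ⟨k, hk⟩ := chart_inj (SA_radicand hs) (SA_radicand hs') h
  rw [← SA_sh] at hk
  exact ⟨k, SA_injOn hs (sh_mem hs') hk⟩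

lemma TA_chart_inj {s s' : ℝ × ℝ × ℂ} (hs : s ∈ SigA) (hs' : s' ∈ SigA)
    (h : Chart (BB (TA s)) = Chart (BB (TA s'))) : ∃ k : ℤ, s = sh (k * (2 * π)) s' := by
  have hT := TA_mem hs
  have hT' := TA_mem hs'
  obtain ⟨k, hk⟩ := chart_inj (BB_radicand hT) (BB_radicand hT') h
  rw [← BB_sh _ hT', ← TA_sh] at hk
  exact ⟨k, TA_injOn hs (sh_mem hs') (BB_injOn hT (TA_mem (sh_mem hs')) hk)⟩

lemma Fold_apply {s : ℝ × ℝ × ℂ} (hs : s ∈ SigA) : Fold (Chart (SA s)) = Chart (BB (TA s)) := by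
  have h : ∃ s' ∈ SigA, Chart (SA s') = Chart (SA s) := ⟨s, hs, rfl⟩
  obtain ⟨k, hk⟩ := SA_chart_inj h.choose_spec.1 hs h.choose_spec.2
  rw [Fold, dif_pos h, hk, TA_sh, BB_sh _ (TA_mem hs), chart_sh]

lemma Fold_of_mem {z : Fin 2 → ℂ} (hz : z ∈ WW) :
    ∃ s ∈ SigA, Chart (SA s) = z ∧ s.1 = uu z := by
  obtain ⟨y, hy, h1, h2⟩ := chart_surj (z := z)
  obtain ⟨v, hv, hv'⟩ := SA_surj (u := y.1) y.2.1 (w := y.2.2) (by rw [h1]; exact hz.1)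
    (by rw [h1, h2]; exact hz.2)
  exact ⟨_, hv, by rw [hv']; exact hy, h1⟩

lemma Fold_of_notMem {z : Fin 2 → ℂ} (hz : z ∉ WW) : Fold z = z := by
  rw [Fold, dif_neg]
  rintro ⟨s, hs, rfl⟩
  apply hz
  have h1 : uu (Chart (SA s)) = s.1 := chart_uu (SA_radicand hs)
  refine ⟨by rw [h1]; exact hs.1, ?_⟩
  rw [h1, chart_pp]
  exact SA_mem hs

/-- The folding map preserves `u`; for `u ≥ 0` it moves `p < a(u)` into `u < p < a(u) + u`. -/
lemma Fold_mem {z : Fin 2 → ℂ} (hz : z ∈ WW) : uu (Fold z) = uu z ∧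
    (uu z < 0 → pp (Fold z) < aa (uu z)) ∧
    (0 ≤ uu z → uu z < pp (Fold z) ∧ pp (Fold z) < aa (uu z) + uu z) := by
  obtain ⟨s, hs, e, hu⟩ := Fold_of_mem hz
  have hT := TA_mem hs
  have hu' : (TA s).1 = uu z := hu
  have hF : Fold z = Chart (BB (TA s)) := by rw [← e, Fold_apply hs]
  rw [hF, chart_uu (BB_radicand hT), BB_fst hT, chart_pp, hu']
  refine ⟨rfl, fun h => ?_, fun h => ?_⟩
  · rw [← hu']; exact BB_normSq_neg hT (by rw [hu']; exact h)
  · rw [← hu']; exact BB_normSq_nonneg hT (by rw [hu']; exact h)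

lemma Fold_uu (z : Fin 2 → ℂ) : uu (Fold z) = uu z := by
  by_cases h : z ∈ WW
  · exact (Fold_mem h).1
  · rw [Fold_of_notMem h]

lemma Fold_injOn_WW {z z' : Fin 2 → ℂ} (hz : z ∈ WW) (hz' : z' ∈ WW) (h : Fold z = Fold z') :
    z = z' := by
  obtain ⟨s, hs, e, -⟩ := Fold_of_mem hz
  obtain ⟨s', hs', e', -⟩ := Fold_of_mem hz'
  rw [← e, ← e', Fold_apply hs, Fold_apply hs'] at h
  obtain ⟨k, hk⟩ := TA_chart_inj hs hs' h
  rw [← e, ← e', hk, SA_sh, chart_sh]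

/-- The folding map is the identity where both generating functions vanish locally. -/
lemma Fold_fix {z : Fin 2 → ℂ} (hu : uu z < 0) (h1 : aa (uu z) < pp z + ee (uu z))
    (h2 : pp z * (aa (uu z) - pp z) < cB * Real.sqrt (-uu z)) : Fold z = z := by
  by_cases hz : z ∈ WW
  · obtain ⟨y, hy, e1, e2⟩ := chart_surj (z := z)
    have hyS : y ∈ SigA := by
      refine ⟨by rw [e1]; exact hz.1, by rw [e1, e2]; exact hz.2, Or.inl (by rw [e1]; exact hu)⟩
    obtain ⟨t1, t2⟩ := SA_TA_trivial (s := y) (by rw [e1, e2]; exact h1)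
    have hB : BB y = y := BB_fix (by rw [e1]; exact hu) (Or.inl (by rw [e1, e2]; exact h2))
    have := Fold_apply hyS
    rw [t1, t2, hB, hy] at this
    exact this
  · exact Fold_of_notMem hz

lemma Fold_sympAt_WW {z : Fin 2 → ℂ} (hz : z ∈ WW) : SympAt (stdSymp 2) (stdSymp 2) Fold z := by
  obtain ⟨s, hs, rfl, -⟩ := Fold_of_mem hz
  have hT := TA_mem hs
  have hCS := chart_sympAt (SA_radicand hs)
  have hCT : SympAt Om (stdSymp 2) (fun y => Chart (BB y)) (TA s) :=
    (chart_sympAt (BB_radicand hT)).comp (BB_sympAt hT)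
  have cS := (SA_hasFDerivAt hs).1
  have cT := TA_contDiffAt hs
  have dS : fderiv ℝ (fun s => Chart (SA s)) s = (fderiv ℝ Chart (SA s)).comp (fderiv ℝ SA s) :=
    fderiv_comp s (hCS.1.differentiableAt (by simp)) (cS.differentiableAt (by simp))
  have dT : fderiv ℝ (fun s => Chart (BB (TA s))) s
      = (fderiv ℝ (fun y => Chart (BB y)) (TA s)).comp (fderiv ℝ TA s) :=
    fderiv_comp (g := fun y => Chart (BB y)) s (hCT.1.differentiableAt (by simp))
      (cT.differentiableAt (by simp))
  refine sympAt_of_correspondence (S := fun s => Chart (SA s)) (T := fun s => Chart (BB (TA s)))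
    (finrank_G.trans finrank_C2.symm) (hCS.1.comp s cS) (hCT.1.comp s cT) ?_ ?_ ?_
  · rw [dS]
    exact (hCS.injective stdSymp_zero Om_nondeg).comp (SA_injective_fderiv hs)
  · filter_upwards [isOpen_SigA.mem_nhds hs] with s' hs'
    exact Fold_apply hs'
  · intro v w
    rw [dS, dT]
    simp only [ContinuousLinearMap.comp_apply]
    rw [hCS.2, hCT.2, SA_TA_form hs]

/-- The set on which the folding map is a symplectic embedding. -/
def OO : Set (Fin 2 → ℂ) :=
  {z | uu z < 0 ∨ pp z < aa (uu z) ∨ (2 + uu z / 3 ≤ pp z ∧ aa (uu z) < pp z)}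

lemma Fold_sympAt {z : Fin 2 → ℂ} (hz : z ∈ OO) : SympAt (stdSymp 2) (stdSymp 2) Fold z := by
  have c1 := uu_continuous
  have c2 := pp_continuous
  have c3 : Continuous aa := aa_contDiff.continuous
  have c4 : Continuous ee := ee_contDiff.continuous
  by_cases hW : z ∈ WW
  · exact Fold_sympAt_WW hW
  refine (sympAt_id _ z).congr ?_
  rcases lt_or_ge (uu z) 0 with hu | hu
  · by_cases hp : pp z < aa (uu z)
    · -- here `u ≤ -3/4`, and for `-1 < u < -1/2` both generating functions vanish
      have hu' : uu z ≤ -(3 / 4) := by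
        by_contra h
        exact hW ⟨not_le.1 h, hp⟩
      have o1 : IsOpen {z | uu z < -(1 / 2)} := isOpen_lt (by fun_prop) (by fun_prop)
      filter_upwards [o1.mem_nhds (show uu z < -(1 / 2) by linarith)] with x hx
      have hx' : uu x < -(1 / 2) := hx
      by_cases hxW : x ∈ WW
      · have h1 := aa_lt_ee (u := uu x) (by linarith [hxW.1]) hx'
        refine Fold_fix (by linarith) (by linarith [pp_nonneg x]) ?_
        have h2 : aa (uu x) ≤ 5 / 2 := by unfold aa; linarith [hxW.1]
        have h3 : pp x * (aa (uu x) - pp x) ≤ 25 / 16 := by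
          nlinarith [sq_nonneg (pp x - 5 / 4), pp_nonneg x]
        have h4 : (7 / 10 : ℝ) ≤ Real.sqrt (-uu x) := by
          apply Real.le_sqrt_of_sq_le; linarith
        have h5 := cB_ge
        nlinarith
      · exact Fold_of_notMem hxW
    · have o1 : IsOpen {z | uu z < 0} := isOpen_lt (by fun_prop) (by fun_prop)
      have o2 : IsOpen {z | aa (uu z) < pp z + ee (uu z)} := isOpen_lt (by fun_prop) (by fun_prop)
      have o3 : IsOpen {z | pp z * (aa (uu z) - pp z) < cB * Real.sqrt (-uu z)} :=
        isOpen_lt (by fun_prop) (by fun_prop)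
      have m2 : aa (uu z) < pp z + ee (uu z) := by
        have := ee_pos hu
        linarith
      have m3 : pp z * (aa (uu z) - pp z) < cB * Real.sqrt (-uu z) := by
        have := cB_sqrt_pos hu
        have := pp_nonneg z
        nlinarith
      filter_upwards [o1.mem_nhds hu, o2.mem_nhds m2, o3.mem_nhds m3] with x h1 h2 h3
      exact Fold_fix h1 h2 h3
  · have hp : aa (uu z) < pp z := by
      rcases hz with h | h | h
      · linarith
      · exact absurd ⟨by linarith, h⟩ hW
      · exact h.2
    have o1 : IsOpen {z | aa (uu z) < pp z} := isOpen_lt (by fun_prop) (by fun_prop)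
    filter_upwards [o1.mem_nhds hp] with x hx
    exact Fold_of_notMem fun h => lt_asymm h.2 hx

lemma Fold_injOn : InjOn Fold OO := by
  -- a moved point never lands on an unmoved point of `OO`
  have key : ∀ z ∈ WW, ∀ z' ∈ OO, z' ∉ WW → Fold z ≠ z' := by
    intro z hz z' hz' hn h
    obtain ⟨h1, h2, h3⟩ := Fold_mem hz
    rw [h] at h1 h2 h3
    rcases lt_or_ge (uu z) 0 with hu | hu
    · exact hn ⟨by rw [h1]; exact hz.1, by rw [h1]; exact h2 hu⟩
    · have h4 := (h3 hu).2
      rw [← h1] at h4 hu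
      rcases hz' with h | h | h
      · linarith
      · exact hn ⟨by linarith, h⟩
      · have := h.1
        unfold aa at h4
        linarith
  intro z hz z' hz' h
  by_cases h1 : z ∈ WW <;> by_cases h2 : z' ∈ WW
  · exact Fold_injOn_WW h1 h2 h
  · rw [Fold_of_notMem h2] at h
    exact absurd h (key z h1 z' hz' h2)
  · rw [Fold_of_notMem h1] at h
    exact absurd h.symm (key z' h2 z hz h1)
  · rwa [Fold_of_notMem h1, Fold_of_notMem h2] at h

/-! ### The embedding -/

/-- Exchange of the two coordinates of `ℂ²`. -/
def sw (z : Fin 2 → ℂ) : Fin 2 → ℂ := ![z 1, z 0]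

lemma sw_injective : Function.Injective sw := by
  intro z z' h
  have h0 := congrFun h 0
  have h1 := congrFun h 1
  simp only [sw, Matrix.cons_val_zero, Matrix.cons_val_one] at h0 h1
  funext i
  fin_cases i
  · exact h1
  · exact h0

lemma sympAt_linear (L : (Fin 2 → ℂ) →L[ℝ] (Fin 2 → ℂ)) {ω : (Fin 2 → ℂ) → (Fin 2 → ℂ) → ℝ}
    {ω' : (Fin 2 → ℂ) → (Fin 2 → ℂ) → ℝ} (h : ∀ v w, ω' (L v) (L w) = ω v w)
    (z : Fin 2 → ℂ) : SympAt ω ω' L z := by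
  refine ⟨L.contDiff.contDiffAt, fun v w => ?_⟩
  rw [L.fderiv]
  exact h v w

lemma sw_sympAt (z : Fin 2 → ℂ) : SympAt (stdSymp 2) (stdSymp 2) sw z := by
  let L : (Fin 2 → ℂ) →L[ℝ] (Fin 2 → ℂ) := ContinuousLinearMap.pi
    ![ContinuousLinearMap.proj 1, ContinuousLinearMap.proj 0]
  have hL : (L : (Fin 2 → ℂ) → (Fin 2 → ℂ)) = sw := by
    funext x i
    fin_cases i <;> simp [L, sw]
  rw [← hL]
  apply sympAt_linear
  intro v w
  rw [hL, stdSymp_two, stdSymp_two]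
  simp [sw]
  ring

lemma uu_sw (z : Fin 2 → ℂ) :
    uu (sw z) = Complex.normSq (z 1) + 2 * Complex.normSq (z 0) - 6 := by
  simp [uu, sw]

lemma pp_sw (z : Fin 2 → ℂ) : pp (sw z) = Complex.normSq (z 0) := by
  simp [pp, sw]

/-- The domain `V_{2/9}`, rescaled so that the target ball is `|z₁|² + |z₂|² ≤ 6`: the open toric
domain over the quadrilateral with vertices `(0,0)`, `(9,0)`, `(2,2)`, `(0,9)`. -/
def V0 : Set (Fin 2 → ℂ) :=
  {z | (Complex.normSq (z 1) ≤ Complex.normSq (z 0) →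
      2 * Complex.normSq (z 0) + 7 * Complex.normSq (z 1) < 18) ∧
    (Complex.normSq (z 0) ≤ Complex.normSq (z 1) →
      7 * Complex.normSq (z 0) + 2 * Complex.normSq (z 1) < 18)}

lemma V0_subset_OO : V0 ⊆ OO := by
  rintro z ⟨h1, h2⟩
  rw [OO, mem_ofPred_eq]
  rcases lt_or_ge (uu z) 0 with hu | hu
  · exact Or.inl hu
  · refine Or.inr ?_
    unfold uu pp aa at *
    rcases le_total (Complex.normSq (z 1)) (Complex.normSq (z 0)) with h | h
    · have := h1 h
      left
      linarith
    · have := h2 h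
      right
      constructor <;> linarith

/-- The square of the norm of a point of `ℂ²`. -/
def nn (z : Fin 2 → ℂ) : ℝ := Complex.normSq (z 0) + Complex.normSq (z 1)

/-- A point of the target ball which the fold with exchanged coordinates leaves fixed. -/
lemma second_fold_fixed {z : Fin 2 → ℂ} (h1 : Complex.normSq (z 1) ≤ Complex.normSq (z 0))
    (h2 : 18 < 7 * Complex.normSq (z 0) + 2 * Complex.normSq (z 1)) (h3 : nn z ≤ 6) :
    sw z ∈ OO ∧ nn (Fold (sw z)) ≤ 6 := by
  have hlt : aa (uu (sw z)) < pp (sw z) := by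
    rw [uu_sw, pp_sw]; unfold aa; linarith
  refine ⟨Or.inr (Or.inr ⟨?_, hlt⟩), ?_⟩
  · rw [uu_sw, pp_sw]; linarith
  · rw [Fold_of_notMem fun h => lt_asymm h.2 hlt]
    unfold nn at *
    simp only [sw, Matrix.cons_val_zero, Matrix.cons_val_one]
    linarith

lemma nn_le_of_uu_neg {z : Fin 2 → ℂ} (h : uu z < 0) : nn z ≤ 6 := by
  have := Complex.normSq_nonneg (z 1)
  unfold uu at h
  unfold nn
  linarith

lemma second_fold {z : Fin 2 → ℂ} (hz : z ∈ V0) :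
    sw (Fold z) ∈ OO ∧ nn (Fold (sw (Fold z))) ≤ 6 := by
  have hu' := Fold_uu z
  rcases lt_or_ge (uu z) 0 with hu | hu
  · rw [← hu'] at hu
    rcases lt_or_ge (uu (sw (Fold z))) 0 with hv | hv
    · refine ⟨Or.inl hv, nn_le_of_uu_neg ?_⟩
      rwa [Fold_uu]
    · have h6 := nn_le_of_uu_neg hu
      rw [uu_sw] at hv
      unfold uu at hu
      exact second_fold_fixed (by linarith) (by linarith) h6
  · by_cases hW : z ∈ WW
    · obtain ⟨-, -, h3⟩ := Fold_mem hW
      obtain ⟨h4, h5⟩ := h3 hu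
      rw [← hu'] at h4 h5 hu
      unfold pp at h4 h5
      unfold aa at h5
      unfold uu at h4 h5 hu
      refine second_fold_fixed ?_ ?_ ?_
      · linarith
      · linarith
      · unfold nn; linarith
    · rw [Fold_of_notMem hW]
      have hp : aa (uu z) ≤ pp z := by
        by_contra! h
        exact hW ⟨by linarith, h⟩
      have hlt : Complex.normSq (z 0) < Complex.normSq (z 1) := by
        by_contra! h
        have := hz.1 h
        unfold uu pp aa at hp
        linarith
      have h7 := hz.2 hlt.le
      have hO : pp (sw z) < aa (uu (sw z)) := by
        rw [uu_sw, pp_sw]; unfold aa; linarith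
      refine ⟨Or.inr (Or.inl hO), ?_⟩
      rcases lt_or_ge (uu (sw z)) 0 with hv | hv
      · apply nn_le_of_uu_neg
        rwa [Fold_uu]
      · obtain ⟨e, -, h3⟩ := Fold_mem (z := sw z) ⟨by linarith, hO⟩
        have h4 := (h3 hv).1
        rw [← e] at h4
        unfold uu pp at h4
        unfold nn
        linarith

/-- Two folds, the second one with the roles of the coordinates exchanged. -/
def Psi (z : Fin 2 → ℂ) : Fin 2 → ℂ := Fold (sw (Fold z))

lemma Psi_injOn : InjOn Psi V0 := by
  intro z hz z' hz' h
  exact Fold_injOn (V0_subset_OO hz) (V0_subset_OO hz')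
    (sw_injective (Fold_injOn (second_fold hz).1 (second_fold hz').1 h))

lemma Psi_sympAt {z : Fin 2 → ℂ} (hz : z ∈ V0) : SympAt (stdSymp 2) (stdSymp 2) Psi z :=
  SympAt.comp (φ := fun y => sw (Fold y)) (Fold_sympAt (second_fold hz).1)
    (SympAt.comp (sw_sympAt _) (Fold_sympAt (V0_subset_OO hz)))

/-- The defining inequalities of the two triangles making up `Q_ε`. -/
lemma Qeps_ineq {ε : ℝ} (hε : 0 < ε) {x : Fin 2 → ℝ} (hx : x ∈ Qeps ε) :
    (x 1 ≤ x 0 ∧ ε * x 0 + (1 - ε) * x 1 ≤ ε) ∨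
      (x 0 ≤ x 1 ∧ (1 - ε) * x 0 + ε * x 1 ≤ ε) := by
  rcases hx with hx | hx
  · left
    have hc : Convex ℝ {x : Fin 2 → ℝ | x 1 ≤ x 0 ∧ ε * x 0 + (1 - ε) * x 1 ≤ ε} := by
      intro x hx y hy a b ha hb hab
      simp only [mem_ofPred_eq, Pi.add_apply, Pi.smul_apply, smul_eq_mul] at *
      constructor
      · nlinarith [mul_le_mul_of_nonneg_left hx.1 ha, mul_le_mul_of_nonneg_left hy.1 hb]
      · have h1 := mul_le_mul_of_nonneg_left hx.2 ha
        have h2 := mul_le_mul_of_nonneg_left hy.2 hb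
        have h3 : a * ε + b * ε = ε := by rw [← add_mul, hab, one_mul]
        linarith
    refine convexHull_min ?_ hc hx
    rintro y (rfl | rfl | rfl)
    · simp; linarith
    · simp
    · simp; nlinarith
  · right
    have hc : Convex ℝ {x : Fin 2 → ℝ | x 0 ≤ x 1 ∧ (1 - ε) * x 0 + ε * x 1 ≤ ε} := by
      intro x hx y hy a b ha hb hab
      simp only [mem_ofPred_eq, Pi.add_apply, Pi.smul_apply, smul_eq_mul] at *
      constructor
      · nlinarith [mul_le_mul_of_nonneg_left hx.1 ha, mul_le_mul_of_nonneg_left hy.1 hb]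
      · have h1 := mul_le_mul_of_nonneg_left hx.2 ha
        have h2 := mul_le_mul_of_nonneg_left hy.2 hb
        have h3 : a * ε + b * ε = ε := by rw [← add_mul, hab, one_mul]
        linarith
    refine convexHull_min ?_ hc hx
    rintro y (rfl | rfl | rfl)
    · simp; linarith
    · simp; nlinarith
    · simp

/-- An interior point remains in the set after a slight dilation. -/
lemma exists_dilation {X : Set (Fin 2 → ℂ)} {z : Fin 2 → ℂ} (hz : z ∈ interior X) :
    ∃ t : ℝ, 1 < t ∧ t • z ∈ X := by
  have hc : Tendsto (fun t : ℝ => t • z) (𝓝[>] 1) (𝓝 z) := by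
    have : ContinuousAt (fun t : ℝ => t • z) 1 := by fun_prop
    have h := this.tendsto
    rw [one_smul] at h
    exact h.mono_left nhdsWithin_le_nhds
  have h1 := hc.eventually (mem_interior_iff_mem_nhds.mp hz)
  obtain ⟨t, ht, ht'⟩ := (h1.and self_mem_nhdsWithin).exists
  exact ⟨t, ht', ht⟩

/-- For `l² = 2π/ε`, dilation by `l` turns the moment coordinates into `(ε/2) |zᵢ|²`. -/
lemma momentMap_smul {ε l t : ℝ} (hε : 0 < ε) (hl : l ^ 2 = 2 * π / ε) (z : Fin 2 → ℂ)
    (i : Fin 2) :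
    momentMap 2 (t • z) i = t ^ 2 * (ε / 2) * Complex.normSq ((l • z) i) := by
  have h1 : Complex.normSq ((l • z) i) = l ^ 2 * Complex.normSq (z i) := by
    simp [Complex.normSq_mul, sq]
  rw [h1, hl, momentMap, Complex.normSq_eq_norm_sq]
  have : ‖(t • z) i‖ ^ 2 = t ^ 2 * ‖z i‖ ^ 2 := by
    simp [mul_pow]
  rw [this]
  field_simp

lemma smul_mem_V0 {ε l : ℝ} (h1 : 2 / 9 ≤ ε) (h2 : ε < 1 / 3) (hl : l ^ 2 = 2 * π / ε)
    {z : Fin 2 → ℂ} (hz : z ∈ interior (toricDomain (Qeps ε))) : l • z ∈ V0 := by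
  have hε : 0 < ε := by linarith
  obtain ⟨t, ht, hm⟩ := exists_dilation hz
  have hq := Qeps_ineq hε (x := momentMap 2 (t • z)) hm
  rw [momentMap_smul hε hl, momentMap_smul hε hl] at hq
  have ha := Complex.normSq_nonneg ((l • z) 0)
  have hb := Complex.normSq_nonneg ((l • z) 1)
  rw [V0, mem_ofPred_eq]
  generalize Complex.normSq ((l • z) 0) = a at *
  generalize Complex.normSq ((l • z) 1) = b at *
  have ht2 : 1 < t ^ 2 := by nlinarith
  have hk : 0 < t ^ 2 * (ε / 2) := by positivity
  -- the slope condition for a given `ε ≥ 2/9` implies the one for `ε = 2/9`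
  have key : ∀ x y : ℝ, 0 ≤ y → 0 ≤ x →
      ε * (t ^ 2 * (ε / 2) * x) + (1 - ε) * (t ^ 2 * (ε / 2) * y) ≤ ε → y ≤ x →
      2 * x + 7 * y < 18 := by
    intro x y hy hx h hyx
    have e : ε * (t ^ 2 * (ε * x + (1 - ε) * y)) ≤ ε * 2 := by linarith
    have e1 : t ^ 2 * (ε * x + (1 - ε) * y) ≤ 2 := le_of_mul_le_mul_left e hε
    have e2 : 2 * x + 7 * y ≤ 9 * (ε * x + (1 - ε) * y) := by
      nlinarith [mul_nonneg (sub_nonneg.2 h1) (sub_nonneg.2 hyx)]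
    have e3 : 0 ≤ ε * x + (1 - ε) * y := by
      have := mul_nonneg hε.le hx
      have := mul_nonneg (show 0 ≤ 1 - ε by linarith) hy
      linarith
    by_contra! hcon
    nlinarith
  rcases hq with ⟨q1, q2⟩ | ⟨q1, q2⟩
  · have hba : b ≤ a := le_of_mul_le_mul_left q1 hk
    have := key a b hb ha q2 hba
    refine ⟨fun _ => this, fun h => ?_⟩
    have : a = b := le_antisymm h hba
    linarith
  · have hab : a ≤ b := le_of_mul_le_mul_left q1 hk
    have := key b a ha hb (by linarith) hab
    refine ⟨fun h => ?_, fun _ => by linarith⟩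
    have : a = b := le_antisymm hab h
    linarith

lemma smul_sympAt (c : ℝ) (z : Fin 2 → ℂ) :
    SympAt (fun v w => c ^ 2 * stdSymp 2 v w) (stdSymp 2) (fun y => c • y) z := by
  have := sympAt_linear (c • ContinuousLinearMap.id ℝ (Fin 2 → ℂ))
    (ω := fun v w => c ^ 2 * stdSymp 2 v w) (ω' := stdSymp 2) (fun v w => by
      rw [stdSymp_two, stdSymp_two]
      simp [ar_eq]
      ring) z
  exact this

/-- The conjugate of the double fold by the dilation of factor `l`. -/
def emb (l : ℝ) (z : Fin 2 → ℂ) : Fin 2 → ℂ := l⁻¹ • Psi (l • z)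

lemma emb_sympAt {l : ℝ} (hl : l ≠ 0) {z : Fin 2 → ℂ} (hz : l • z ∈ V0) :
    SympAt (stdSymp 2) (stdSymp 2) (emb l) z := by
  have h1 := (Psi_sympAt hz).comp (smul_sympAt l z)
  have h2 : SympAt (stdSymp 2) (fun v w => (l⁻¹) ^ 2 * stdSymp 2 v w)
      (fun y => Psi (l • y)) z := by
    refine ⟨h1.1, fun v w => ?_⟩
    beta_reduce
    rw [h1.2]
    field_simp
  exact SympAt.comp (φ := fun y => Psi (l • y)) (smul_sympAt l⁻¹ (Psi (l • z))) h2

lemma emb_mem {ε l : ℝ} (hε : 0 < ε) (hl : l ^ 2 = 2 * π / ε) {z : Fin 2 → ℂ}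
    (hz : l • z ∈ V0) : emb l z ∈ ellipsoid ![3 * ε, 3 * ε] := by
  have h := (second_fold hz).2
  have h' : nn (Psi (l • z)) ≤ 6 := h
  rw [ellipsoid, mem_ofPred_eq, Fin.sum_univ_two]
  have hn : ∀ i, ‖emb l z i‖ ^ 2 = ε / (2 * π) * Complex.normSq (Psi (l • z) i) := by
    intro i
    have : ‖emb l z i‖ ^ 2 = (l ^ 2)⁻¹ * Complex.normSq (Psi (l • z) i) := by
      rw [Complex.normSq_eq_norm_sq]
      simp [emb, mul_pow]
    rw [this, hl, inv_div]
  rw [hn, hn]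
  unfold nn at h'
  have e : π * (ε / (2 * π) * Complex.normSq (Psi (l • z) 0)) / (3 * ε) +
      π * (ε / (2 * π) * Complex.normSq (Psi (l • z) 1)) / (3 * ε) =
      (Complex.normSq (Psi (l • z) 0) + Complex.normSq (Psi (l • z) 1)) / 6 := by
    have := Real.pi_ne_zero
    field_simp
    ring
  simp only [Matrix.cons_val_zero, Matrix.cons_val_one]
  rw [e]
  linarith

end ToricFold

/-- For every `ε ∈ [2/9, 1/3)`, (the interior of) `V_ε = μ⁻¹(Q_ε) ⊂ ℂ²`
symplectically embeds into the ball `B⁴(3ε) = E(3ε,3ε)`. -/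
theorem stmt7 (ε : ℝ) (hε : ε ∈ Set.Ico (2 / 9 : ℝ) (1 / 3)) :
    SympEmb 2 (interior (toricDomain (Qeps ε))) (ellipsoid ![3 * ε, 3 * ε]) := by
  have hε0 : 0 < ε := by linarith [hε.1]
  have hpos : 0 < 2 * π / ε := by have := Real.pi_pos; positivity
  have hl : Real.sqrt (2 * π / ε) ^ 2 = 2 * π / ε := Real.sq_sqrt hpos.le
  have hl0 : Real.sqrt (2 * π / ε) ≠ 0 := (Real.sqrt_pos.2 hpos).ne'
  generalize Real.sqrt (2 * π / ε) = l at hl hl0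
  have hV : ∀ z ∈ interior (toricDomain (Qeps ε)), l • z ∈ ToricFold.V0 := fun z hz =>
    ToricFold.smul_mem_V0 hε.1 hε.2 hl hz
  refine ⟨ToricFold.emb l, ?_, ?_, ?_, ?_⟩
  · intro z hz z' hz' h
    exact smul_right_injective _ hl0
      (ToricFold.Psi_injOn (hV z hz) (hV z' hz') (smul_right_injective _ (inv_ne_zero hl0) h))
  · rintro _ ⟨z, hz, rfl⟩
    exact ToricFold.emb_mem hε0 hl (hV z hz)
  · rw [interior_interior]
    intro z hz
    exact (ToricFold.emb_sympAt hl0 (hV z hz)).1.contDiffWithinAt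
  · rw [interior_interior]
    intro z hz
    exact (ToricFold.emb_sympAt hl0 (hV z hz)).2

end
end

section
/- For every ε ∈ (0, 1/3), the ellipsoid E(3ε/2, 3ε) ⊂ ℂ² is contained in V_ε = μ⁻¹(Q_ε). -/
/-!
Writing `(x, y) = μ(z)`, the ellipsoid condition reads `x, y ≥ 0`, `2x + y ≤ 3ε`. The point
`(ε, ε)` lies on the line `2x + y = 3ε`, so the diagonal cuts the moment triangle into two
triangles, one in each half of `Q_ε`. Explicitly, if `y ≤ x` then
`(x, y) = (x - y) • (1, 0) + (y / ε) • (ε, ε)`, if `x ≤ y` then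
`(x, y) = (x / ε) • (ε, ε) + (y - x) • (0, 1)`, and in both cases the coefficients are
nonnegative with sum at most `1`, the remaining weight going to the vertex `(0, 0)`.
-/
open Set MeasureTheory
open scoped Real ENNReal Pointwise

noncomputable section

lemma mem_convexHull_triple {E : Type*} [AddCommGroup E] [Module ℝ E] (p q r : E) {a b c : ℝ}
    (ha : 0 ≤ a) (hb : 0 ≤ b) (hc : 0 ≤ c) (h : a + b + c = 1) :
    a • p + b • q + c • r ∈ convexHull ℝ {p, q, r} := by
  have hs : ∀ i ∈ (Finset.univ : Finset (Fin 3)), ![p, q, r] i ∈ convexHull ℝ {p, q, r} := by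
    intro i _
    apply subset_convexHull
    fin_cases i <;> simp
  have := (convex_convexHull ℝ ({p, q, r} : Set E)).sum_mem (t := Finset.univ)
    (w := ![a, b, c]) (z := ![p, q, r]) (by intro i _; fin_cases i <;> simpa)
    (by simpa [Fin.sum_univ_three] using h) hs
  simpa [Fin.sum_univ_three] using this

/-- For every `ε ∈ (0,1/3)`, `E(3ε/2, 3ε) ⊆ V_ε = μ⁻¹(Q_ε)`. -/
theorem stmt15 (ε : ℝ) (hε : ε ∈ Set.Ioo (0 : ℝ) (1 / 3)) :
    ellipsoid ![3 * ε / 2, 3 * ε] ⊆ toricDomain (Qeps ε) := by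
  obtain ⟨h0, h1⟩ := hε
  intro z hz
  simp only [ellipsoid, Set.mem_ofPred_eq, Fin.sum_univ_two, Matrix.cons_val_zero,
    Matrix.cons_val_one] at hz
  have hx : 0 ≤ Real.pi * ‖z 0‖ ^ 2 := by positivity
  have hy : 0 ≤ Real.pi * ‖z 1‖ ^ 2 := by positivity
  have hμ : momentMap 2 z = ![Real.pi * ‖z 0‖ ^ 2, Real.pi * ‖z 1‖ ^ 2] := by
    ext i; fin_cases i <;> rfl
  change momentMap 2 z ∈ Qeps ε
  rw [hμ]
  generalize Real.pi * ‖z 0‖ ^ 2 = x at *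
  generalize Real.pi * ‖z 1‖ ^ 2 = y at *
  have hxy : 2 * x + y ≤ 3 * ε := by
    have e : x / (3 * ε / 2) + y / (3 * ε) = (2 * x + y) / (3 * ε) := by field_simp
    rwa [e, div_le_one (by positivity)] at hz
  rcases le_total y x with h | h
  · left
    have hsum : (x - y) + y / ε ≤ 1 := by
      have : y / ε ≤ 1 - (x - y) := by
        rw [div_le_iff₀ h0]
        -- `x ≤ (3ε - y) / 2` reduces the claim to `(1 - 3ε/2) (ε - y) ≥ 0`.
        nlinarith [mul_nonneg h0.le (sub_nonneg.2 hxy),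
          mul_nonneg (by linarith : 0 ≤ 1 - 3 * ε / 2) (by linarith : 0 ≤ ε - y)]
      linarith
    convert mem_convexHull_triple ![0, 0] ![1, 0] ![ε, ε]
      (a := 1 - ((x - y) + y / ε)) (b := x - y) (c := y / ε)
      (by linarith) (by linarith) (by positivity) (by ring) using 1
    ext i; fin_cases i <;> simp [h0.ne']
  · right
    have hsum : x / ε + (y - x) ≤ 1 := by
      have : x / ε ≤ 1 - (y - x) := by
        rw [div_le_iff₀ h0]
        -- `y ≤ 3ε - 2x` reduces the claim to `(1 - 3ε) (ε - x) ≥ 0`.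
        nlinarith [mul_nonneg h0.le (sub_nonneg.2 hxy),
          mul_nonneg (by linarith : 0 ≤ 1 - 3 * ε) (by linarith : 0 ≤ ε - x)]
      linarith
    convert mem_convexHull_triple ![0, 0] ![ε, ε] ![0, 1]
      (a := 1 - (x / ε + (y - x))) (b := x / ε) (c := y - x)
      (by linarith) (by positivity) (by linarith) (by ring) using 1
    ext i; fin_cases i <;> simp [h0.ne']

end
end
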